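/- arXiv:2206.09832 — 4 statements merged into one kernel-verified Lean document; each statement's English description precedes it below -/
import Mathlib

section
/- Let N ≥ 3, m > 1, γ ∈ (0,2), T > 0 and a ≥ 0. Set κ := (N−γ)(m−1)/((N−γ)(m−1)+2−γ) and define u : (ℝᴺ \ {0}) × (0,T) → ℝ by u(x,t) = [ a T^κ (T−t)^{−κ} + (κ/(m(2−γ)(N−γ))) |x|^{2−γ} (T−t)^{−1} ]^{1/(m−1)}. Then for every x ∈ ℝᴺ \ {0} and t ∈ (0,T), u is smooth near (x,t) and satisfies |x|^{−γ} ∂u/∂t (x,t) = Δ_x (uᵐ)(x,t), where uᵐ := u^m (u is positive) and Δ_x denotes the Laplacian in the space variable. -/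
open MeasureTheory Metric Filter Set ENNReal

noncomputable section

abbrev Euc (N : ℕ) := EuclideanSpace ℝ (Fin N)

/-- The weight condition: `k (1+|x|)^(-γ) ≤ ρ(x) ≤ K |x|^(-γ)` for a.e. `x`. -/
def WeightCond (N : ℕ) (γ k K : ℝ) (ρ : Euc N → ℝ) : Prop :=
  Measurable ρ ∧
    ∀ᵐ x : Euc N ∂volume, k * (1 + ‖x‖) ^ (-γ) ≤ ρ x ∧ ρ x ≤ K * ‖x‖ ^ (-γ)

/-- Local integrability with respect to the weight `ρ`. -/
def LocInt1 {N : ℕ} (ρ f : Euc N → ℝ) : Prop :=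
  ∀ R : ℝ, 0 < R → IntegrableOn (fun x => |f x| * ρ x) (ball (0 : Euc N) R)

/-- The weighted norm `‖f‖_{1,r}`. -/
def wnorm1 {N : ℕ} (ρ : Euc N → ℝ) (m γ : ℝ) (r : ℝ) (f : Euc N → ℝ) : ℝ :=
  sSup ((fun R : ℝ =>
    R ^ (-((2 - γ) / (m - 1)) - (N : ℝ) + γ) * ∫ x in ball (0 : Euc N) R, |f x| * ρ x) '' Ici r)

/-- Membership in the space `X`. -/
def memX {N : ℕ} (ρ : Euc N → ℝ) (m γ : ℝ) (f : Euc N → ℝ) : Prop :=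
  LocInt1 ρ f ∧
    BddAbove ((fun R : ℝ =>
      R ^ (-((2 - γ) / (m - 1)) - (N : ℝ) + γ) * ∫ x in ball (0 : Euc N) R, |f x| * ρ x) '' Ici 1)

/-- `ℓ(f) = lim_{r→∞} ‖f‖_{1,r}`; since `r ↦ ‖f‖_{1,r}` is nonincreasing and nonnegative,
the limit equals the infimum. -/
def ell {N : ℕ} (ρ : Euc N → ℝ) (m γ : ℝ) (f : Euc N → ℝ) : ℝ :=
  sInf ((fun r : ℝ => wnorm1 ρ m γ r f) '' Ici 1)

/-- The weighted norm `‖f‖_{∞,r}`. -/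
def wnormInf {N : ℕ} (m γ : ℝ) (r : ℝ) (f : Euc N → ℝ) : ℝ :=
  sSup ((fun R : ℝ =>
    R ^ (-((2 - γ) / (m - 1))) *
      (eLpNorm f ⊤ (volume.restrict (ball (0 : Euc N) R))).toReal) '' Ici r)

/-- Membership in the space `X_∞`. -/
def memXinf {N : ℕ} (m γ : ℝ) (f : Euc N → ℝ) : Prop :=
  AEStronglyMeasurable f volume ∧
  (∀ R : ℝ, 0 < R → eLpNorm f ⊤ (volume.restrict (ball (0 : Euc N) R)) < ⊤) ∧
  BddAbove ((fun R : ℝ =>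
    R ^ (-((2 - γ) / (m - 1))) *
      (eLpNorm f ⊤ (volume.restrict (ball (0 : Euc N) R))).toReal) '' Ici 1)

/-- Signed power `u^m := |u|^(m-1) u`. -/
def spow (m s : ℝ) : ℝ := |s| ^ (m - 1) * s

/-- The Laplacian of `φ : ℝᴺ → ℝ`, as a sum of second directional derivatives along the
standard orthonormal basis. -/
def lap {N : ℕ} (φ : Euc N → ℝ) (x : Euc N) : ℝ :=
  ∑ i : Fin N, fderiv ℝ (fun y => fderiv ℝ φ y (EuclideanSpace.single i (1 : ℝ))) x
    (EuclideanSpace.single i (1 : ℝ))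

/-- The open time interval `(0,T)`, for `T ∈ (0,∞]`. -/
def TimeSet (T : ℝ≥0∞) : Set ℝ := {t : ℝ | 0 < t ∧ ENNReal.ofReal t < T}

/-- The time interval `[0,T)`, for `T ∈ (0,∞]`. -/
def TimeSet0 (T : ℝ≥0∞) : Set ℝ := {t : ℝ | 0 ≤ t ∧ ENNReal.ofReal t < T}

/-- Very weak solution of `ρ u_t = Δ(u^m)` on `ℝᴺ × (0,T)` with initial datum `u₀`. -/
def IsVeryWeakSol {N : ℕ} (ρ : Euc N → ℝ) (m : ℝ) (T : ℝ≥0∞)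
    (u : Euc N → ℝ → ℝ) (u₀ : Euc N → ℝ) : Prop :=
  (∀ t ∈ TimeSet0 T, LocInt1 ρ (fun x => u x t)) ∧
  (∀ s ∈ TimeSet0 T, ∀ R : ℝ, 0 < R →
    Tendsto (fun t => ∫ x in ball (0 : Euc N) R, |u x t - u x s| * ρ x)
      (nhdsWithin s (TimeSet0 T)) (nhds 0)) ∧
  (∀ᵐ x : Euc N ∂volume, u x 0 = u₀ x) ∧
  (∀ R : ℝ, 0 < R → ∀ a b : ℝ, 0 < a → a ≤ b → ENNReal.ofReal b < T →
    IntegrableOn (fun p : Euc N × ℝ => spow m (u p.1 p.2)) (ball (0 : Euc N) R ×ˢ Icc a b)) ∧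
  (∀ φ : Euc N × ℝ → ℝ, ContDiff ℝ (⊤ : ℕ∞) φ → HasCompactSupport φ →
    tsupport φ ⊆ {p : Euc N × ℝ | p.2 ∈ TimeSet T} →
    -(∫ p : Euc N × ℝ in (univ : Set (Euc N)) ×ˢ TimeSet T,
        u p.1 p.2 * deriv (fun s => φ (p.1, s)) p.2 * ρ p.1) =
      ∫ p : Euc N × ℝ in (univ : Set (Euc N)) ×ˢ TimeSet T,
        spow m (u p.1 p.2) * lap (fun y => φ (y, p.2)) p.1)

/-- The existence time `T = C / L^(m-1)` if `L > 0`, and `T = ∞` if `L = 0` (here `L = ℓ(u₀)` or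
`L = ‖u₀‖_{1,r}`). -/
def Tof (C m L : ℝ) : ℝ≥0∞ := if 0 < L then ENNReal.ofReal (C / L ^ (m - 1)) else ⊤

end

/-!
In terms of the pressure `v = u ^ (m - 1)`, the equation `ρ u_t = Δ(u ^ m)` becomes
`ρ v_t = m v Δv + m / (m - 1) |∇v|²` wherever `v > 0`. For `ρ = |x|^(-γ)` and
`v = A (T - t)^(-κ) + b |x|^(2 - γ) / (T - t)`, both sides are `|x|^(-γ)` times a combination of
`(T - t)^(-κ - 1)` and `|x|^(2 - γ) (T - t)^(-2)`; matching the two coefficients forces exactly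
the stated values of `b` and `κ`.
-/

open scoped Topology Laplacian InnerProductSpace

section Laplacian

lemma differentiableAt_fderiv_of_contDiffAt {E F : Type*} [NormedAddCommGroup E] [NormedSpace ℝ E]
    [NormedAddCommGroup F] [NormedSpace ℝ F] {f : E → F} {x : E} (hf : ContDiffAt ℝ 2 f x) :
    DifferentiableAt ℝ (fderiv ℝ f) x :=
  (hf.fderiv_right (m := 1) (by norm_num)).differentiableAt_one

variable {E : Type*} [NormedAddCommGroup E] [InnerProductSpace ℝ E]

lemma hasFDerivAt_norm_rpow_of_ne {x : E} (hx : x ≠ 0) (e : ℝ) :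
    HasFDerivAt (fun y : E => ‖y‖ ^ e) ((e * ‖x‖ ^ (e - 2)) • innerSL ℝ x) x := by
  have hsq (y : E) (c : ℝ) : (‖y‖ ^ 2) ^ (c / 2) = ‖y‖ ^ c := by
    rw [← Real.rpow_natCast_mul (norm_nonneg y), Nat.cast_ofNat, mul_div_cancel₀ _ two_ne_zero]
  have h := (hasStrictFDerivAt_norm_sq x).hasFDerivAt.rpow_const (p := e / 2)
    (Or.inl (by positivity))
  rw [show e / 2 - 1 = (e - 2) / 2 by ring] at h
  simp only [hsq] at h
  refine h.congr_fderiv ?_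
  ext y
  simp only [smul_apply, smul_eq_mul, nsmul_eq_mul]
  ring

lemma contDiffAt_norm_rpow_of_ne {n : WithTop ℕ∞} {x : E} (hx : x ≠ 0) (e : ℝ) :
    ContDiffAt ℝ n (fun y : E => ‖y‖ ^ e) x :=
  (contDiffAt_norm ℝ hx).rpow_const_of_ne (norm_ne_zero_iff.2 hx)

variable [FiniteDimensional ℝ E]

lemma laplacian_eq_sum_fderiv_fderiv {F ι : Type*} [NormedAddCommGroup F] [NormedSpace ℝ F]
    [Fintype ι] (b : OrthonormalBasis ι ℝ E) (f : E → F) (x : E) :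
    Δ f x = ∑ i, fderiv ℝ (fderiv ℝ f) x (b i) (b i) := by
  simp [congrFun (InnerProductSpace.laplacian_eq_iteratedFDeriv_orthonormalBasis f b) x,
    iteratedFDeriv_two_apply]

lemma laplacian_comp {f : E → ℝ} {φ φ' : ℝ → ℝ} {φ'' : ℝ} {x : E} (hf : ContDiffAt ℝ 2 f x)
    (hφ : ∀ᶠ s in 𝓝 (f x), HasDerivAt φ (φ' s) s) (hφ' : HasDerivAt φ' φ'' (f x)) :
    Δ (fun y => φ (f y)) x = φ' (f x) * Δ f x + φ'' * ‖fderiv ℝ f x‖ ^ 2 := by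
  have hfirst : fderiv ℝ (fun y => φ (f y)) =ᶠ[𝓝 x] fun y => φ' (f y) • fderiv ℝ f y := by
    filter_upwards [hf.continuousAt.eventually hφ, hf.eventually (by simp)] with y hφy hfy
    exact (hφy.comp_hasFDerivAt y (hfy.differentiableAt two_ne_zero).hasFDerivAt).fderiv
  have hsecond := ((hφ'.comp_hasFDerivAt x (hf.differentiableAt two_ne_zero).hasFDerivAt).smul
    (differentiableAt_fderiv_of_contDiffAt hf).hasFDerivAt).congr_of_eventuallyEq hfirst
  let b := stdOrthonormalBasis ℝ E
  rw [laplacian_eq_sum_fderiv_fderiv b, laplacian_eq_sum_fderiv_fderiv b, b.norm_dual,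
    Finset.mul_sum, Finset.mul_sum, ← Finset.sum_add_distrib, hsecond.fderiv]
  refine Finset.sum_congr rfl fun i _ => ?_
  simp only [Function.comp_apply, add_apply, smul_apply, ContinuousLinearMap.smulRight_apply,
    smul_eq_mul]
  ring

lemma laplacian_rpow {f : E → ℝ} {x : E} (hf : ContDiffAt ℝ 2 f x) (hfx : f x ≠ 0) (q : ℝ) :
    Δ (fun y => f y ^ q) x = q * f x ^ (q - 1) * Δ f x +
      q * ((q - 1) * f x ^ (q - 2)) * ‖fderiv ℝ f x‖ ^ 2 := by
  have hφ : ∀ᶠ s in 𝓝 (f x), HasDerivAt (fun s : ℝ => s ^ q) (q * s ^ (q - 1)) s := by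
    filter_upwards [isOpen_ne.mem_nhds hfx] with s hs
    exact Real.hasDerivAt_rpow_const (Or.inl hs)
  have hφ' := (Real.hasDerivAt_rpow_const (p := q - 1) (Or.inl hfx)).const_mul q
  rw [sub_sub, one_add_one_eq_two] at hφ'
  exact laplacian_comp (φ := fun s => s ^ q) (φ' := fun s => q * s ^ (q - 1)) hf hφ hφ'

lemma laplacian_const_add_const_mul {f : E → ℝ} {x : E} (hf : ContDiffAt ℝ 2 f x) (A B : ℝ) :
    Δ (fun y => A + B * f y) x = B * Δ f x := by
  have h := laplacian_comp hf (φ := fun s => A + B * s) (φ' := fun _ => B)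
    (Eventually.of_forall fun s => by simpa using ((hasDerivAt_id s).const_mul B).const_add A)
    (hasDerivAt_const _ B)
  rwa [zero_mul, add_zero] at h

lemma laplacian_norm_sq (x : E) : Δ (fun y : E => ‖y‖ ^ 2) x = 2 * Module.finrank ℝ E := by
  let L : E →L[ℝ] E →L[ℝ] ℝ := 2 • innerSL ℝ
  have hfirst : fderiv ℝ (fun y : E => ‖y‖ ^ 2) = L := funext fun y => fderiv_norm_sq_apply y
  have hdiag (v : E) : L v v = 2 * ‖v‖ ^ 2 := by
    rw [← real_inner_self_eq_norm_sq, ← Nat.cast_ofNat, ← nsmul_eq_mul]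
    rfl
  rw [laplacian_eq_sum_fderiv_fderiv (stdOrthonormalBasis ℝ E), hfirst, L.fderiv]
  simp [hdiag, mul_comm]

lemma laplacian_norm_rpow {x : E} (hx : x ≠ 0) (e : ℝ) :
    Δ (fun y : E => ‖y‖ ^ e) x = e * (e - 2 + Module.finrank ℝ E) * ‖x‖ ^ (e - 2) := by
  have hx' : 0 < ‖x‖ := norm_pos_iff.2 hx
  have hsq (y : E) (c : ℝ) : (‖y‖ ^ 2) ^ c = ‖y‖ ^ (2 * c) :=
    (Real.rpow_natCast_mul (norm_nonneg y) 2 c).symm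
  have h := laplacian_rpow (contDiff_norm_sq ℝ).contDiffAt (pow_ne_zero 2 hx'.ne') (e / 2)
  have hgrad : ‖fderiv ℝ (fun y : E => ‖y‖ ^ 2) x‖ = 2 * ‖x‖ := by
    simp [fderiv_norm_sq_apply, norm_smul, ← Nat.cast_smul_eq_nsmul ℝ]
  have hpow : ‖x‖ ^ (e - 2) = ‖x‖ ^ (e - 4) * ‖x‖ ^ 2 := by
    rw [← Real.rpow_add_natCast hx'.ne', Nat.cast_ofNat]
    ring_nf
  simp only [hsq, laplacian_norm_sq, hgrad] at h
  rw [show 2 * (e / 2) = e by ring, show 2 * (e / 2 - 1) = e - 2 by ring,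
    show 2 * (e / 2 - 2) = e - 4 by ring] at h
  rw [h]
  linear_combination (-(e * (e - 2))) * hpow

lemma mul_deriv_eq_laplacian_of_pressure {v : E → ℝ → ℝ} {m ρ t : ℝ} {x : E} (hm : m ≠ 1)
    (hx : ContDiffAt ℝ 2 (fun y => v y t) x) (ht : DifferentiableAt ℝ (v x) t) (hv : 0 < v x t)
    (hpressure : ρ * deriv (v x) t =
      m * v x t * Δ (fun y => v y t) x + m / (m - 1) * ‖fderiv ℝ (fun y => v y t) x‖ ^ 2) :
    ρ * deriv (fun s => v x s ^ (1 / (m - 1))) t =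
      Δ (fun y => (v y t ^ (1 / (m - 1))) ^ m) x := by
  have hm' : m - 1 ≠ 0 := sub_ne_zero.2 hm
  have hpow : (fun y => (v y t ^ (1 / (m - 1))) ^ m) =ᶠ[𝓝 x]
      fun y => v y t ^ (m / (m - 1)) := by
    filter_upwards [hx.continuousAt.eventually (lt_mem_nhds hv)] with y hy
    rw [← Real.rpow_mul hy.le, one_div_mul_eq_div]
  have hexp₁ : m / (m - 1) - 1 = 1 / (m - 1) := by field_simp; ring
  have hexp₂ : m / (m - 1) - 2 = 1 / (m - 1) - 1 := by linarith
  have hsplit : v x t ^ (1 / (m - 1)) = v x t ^ (1 / (m - 1) - 1) * v x t := by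
    rw [Real.rpow_sub_one hv.ne', div_mul_cancel₀ _ hv.ne']
  rw [InnerProductSpace.laplacian_congr_nhds hpow |>.eq_of_nhds, laplacian_rpow hx hv.ne', hexp₁,
    hexp₂, hsplit, (ht.hasDerivAt.rpow_const (Or.inl hv.ne')).deriv]
  linear_combination (1 / (m - 1) * v x t ^ (1 / (m - 1) - 1)) * hpressure

end Laplacian

lemma lap_eq_laplacian {N : ℕ} {φ : Euc N → ℝ} {x : Euc N} (hφ : ContDiffAt ℝ 2 φ x) :
    lap φ x = Δ φ x := by
  rw [laplacian_eq_sum_fderiv_fderiv (EuclideanSpace.basisFun (Fin N) ℝ)]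
  simp [lap, fderiv_clm_apply (differentiableAt_fderiv_of_contDiffAt hφ) (differentiableAt_const _)]

section BlowupPressure

/-- The exponent `κ` governing the blow-up rate `(T - t)^(-κ)` of the spatially constant part of
the pressure. -/
noncomputable def blowupExponent (N : ℕ) (m γ : ℝ) : ℝ :=
  ((N : ℝ) - γ) * (m - 1) / (((N : ℝ) - γ) * (m - 1) + 2 - γ)

/-- The pressure `u ^ (m - 1)` of the explicit blow-up solution `u`, normalized without the usual
factor `m / (m - 1)`; the free constant `A` stands for `a T ^ κ`. -/
noncomputable def blowupPressure {N : ℕ} (m γ T A : ℝ) (x : Euc N) (t : ℝ) : ℝ :=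
  A * (T - t) ^ (-blowupExponent N m γ) +
    blowupExponent N m γ / (m * (2 - γ) * ((N : ℝ) - γ)) * ‖x‖ ^ (2 - γ) / (T - t)

variable {N : ℕ} {m γ T A t : ℝ} {x : Euc N}

lemma blowupExponent_denom_pos (hm : 1 < m) (hγ : γ < 2) (hN : γ < N) :
    0 < ((N : ℝ) - γ) * (m - 1) + 2 - γ := by
  rw [add_sub_assoc]
  exact add_pos (mul_pos (sub_pos.2 hN) (sub_pos.2 hm)) (sub_pos.2 hγ)

lemma blowupExponent_pos (hm : 1 < m) (hγ : γ < 2) (hN : γ < N) : 0 < blowupExponent N m γ :=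
  div_pos (mul_pos (sub_pos.2 hN) (sub_pos.2 hm)) (blowupExponent_denom_pos hm hγ hN)

lemma blowupPressure_denom_pos (hm : 0 < m) (hγ : γ < 2) (hN : γ < N) :
    0 < m * (2 - γ) * ((N : ℝ) - γ) :=
  mul_pos (mul_pos hm (sub_pos.2 hγ)) (sub_pos.2 hN)

lemma blowupPressure_pos (hm : 1 < m) (hγ : γ < 2) (hN : γ < N) (hA : 0 ≤ A) (hx : x ≠ 0)
    (ht : t < T) : 0 < blowupPressure m γ T A x t := by
  have := blowupExponent_pos hm hγ hN
  have := blowupPressure_denom_pos (one_pos.trans hm) hγ hN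
  have := sub_pos.2 ht
  unfold blowupPressure
  positivity

lemma contDiffAt_blowupPressure {n : WithTop ℕ∞} (hx : x ≠ 0) (ht : t < T) :
    ContDiffAt ℝ n (fun p : Euc N × ℝ => blowupPressure m γ T A p.1 p.2) (x, t) := by
  have hτ : T - t ≠ 0 := (sub_pos.2 ht).ne'
  have htime : ContDiffAt ℝ n (fun p : Euc N × ℝ => T - p.2) (x, t) := by fun_prop
  have hnorm : ContDiffAt ℝ n (fun p : Euc N × ℝ => ‖p.1‖ ^ (2 - γ)) (x, t) :=
    (contDiffAt_norm_rpow_of_ne hx _).comp (x, t) contDiffAt_fst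
  exact (contDiffAt_const.mul (htime.rpow_const_of_ne hτ)).add
    ((contDiffAt_const.mul hnorm).div htime hτ)

lemma blowupPressure_eq_const_add_const_mul (y : Euc N) :
    blowupPressure m γ T A y t = A * (T - t) ^ (-blowupExponent N m γ) +
      blowupExponent N m γ / (m * (2 - γ) * ((N : ℝ) - γ)) / (T - t) * ‖y‖ ^ (2 - γ) := by
  rw [blowupPressure, mul_div_right_comm]

lemma deriv_blowupPressure (ht : t < T) :
    deriv (blowupPressure m γ T A x) t =
      blowupExponent N m γ * A * (T - t) ^ (-blowupExponent N m γ) / (T - t) +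
        blowupExponent N m γ / (m * (2 - γ) * ((N : ℝ) - γ)) * ‖x‖ ^ (2 - γ) / (T - t) ^ 2 := by
  have hτ : T - t ≠ 0 := (sub_pos.2 ht).ne'
  have htime : HasDerivAt (fun s : ℝ => T - s) (-1) t := by
    simpa using (hasDerivAt_id t).const_sub T
  have h := ((htime.rpow_const (p := -blowupExponent N m γ) (Or.inl hτ)).const_mul A).fun_add
    ((hasDerivAt_const t
      (blowupExponent N m γ / (m * (2 - γ) * ((N : ℝ) - γ)) * ‖x‖ ^ (2 - γ))).fun_div htime hτ)
  refine (h.congr_deriv ?_).deriv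
  rw [Real.rpow_sub_one hτ]
  ring

lemma laplacian_blowupPressure (hb : m * (2 - γ) * ((N : ℝ) - γ) ≠ 0) (hx : x ≠ 0) :
    m * Δ (fun y : Euc N => blowupPressure m γ T A y t) x =
      blowupExponent N m γ / (T - t) * ‖x‖ ^ (-γ) := by
  simp only [blowupPressure_eq_const_add_const_mul]
  rw [laplacian_const_add_const_mul (contDiffAt_norm_rpow_of_ne hx _), laplacian_norm_rpow hx,
    finrank_euclideanSpace_fin, sub_sub_cancel_left]
  linear_combination (‖x‖ ^ (-γ) / (T - t)) * div_mul_cancel₀ (blowupExponent N m γ) hb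

lemma norm_sq_fderiv_blowupPressure (hx : x ≠ 0) :
    ‖fderiv ℝ (fun y : Euc N => blowupPressure m γ T A y t) x‖ ^ 2 =
      (blowupExponent N m γ / (m * (2 - γ) * ((N : ℝ) - γ)) / (T - t) * (2 - γ)) ^ 2 *
        (‖x‖ ^ (-γ) * ‖x‖ ^ (2 - γ)) := by
  have hpow : ‖x‖ ^ (2 - γ) = ‖x‖ ^ (-γ) * ‖x‖ ^ 2 := by
    rw [← Real.rpow_add_natCast (norm_ne_zero_iff.2 hx), Nat.cast_ofNat, neg_add_eq_sub]
  simp only [blowupPressure_eq_const_add_const_mul]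
  rw [(((hasFDerivAt_norm_rpow_of_ne hx (2 - γ)).const_mul _).const_add _).fderiv,
    sub_sub_cancel_left, norm_smul, norm_smul, innerSL_apply_norm, hpow]
  simp only [mul_pow, Real.norm_eq_abs, sq_abs]
  ring

lemma blowupExponent_mul_one_add (hm : m ≠ 1) (hN : (N : ℝ) - γ ≠ 0)
    (hκ : ((N : ℝ) - γ) * (m - 1) + 2 - γ ≠ 0) :
    blowupExponent N m γ * (1 + (2 - γ) / (((N : ℝ) - γ) * (m - 1))) = 1 := by
  have hm' : m - 1 ≠ 0 := sub_ne_zero.2 hm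
  rw [blowupExponent]
  field_simp
  ring

lemma blowupPressure_equation (hm : m ≠ 1) (hb : m * (2 - γ) * ((N : ℝ) - γ) ≠ 0)
    (hκ : ((N : ℝ) - γ) * (m - 1) + 2 - γ ≠ 0) (hx : x ≠ 0) (ht : t < T) :
    ‖x‖ ^ (-γ) * deriv (blowupPressure m γ T A x) t =
      m * blowupPressure m γ T A x t * Δ (fun y : Euc N => blowupPressure m γ T A y t) x +
        m / (m - 1) * ‖fderiv ℝ (fun y : Euc N => blowupPressure m γ T A y t) x‖ ^ 2 := by
  obtain ⟨⟨hm0, hγ⟩, hN⟩ := by simpa only [mul_ne_zero_iff] using hb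
  have hbalance := blowupExponent_mul_one_add hm hN hκ
  rw [mul_right_comm, laplacian_blowupPressure hb hx, deriv_blowupPressure ht,
    norm_sq_fderiv_blowupPressure hx, blowupPressure]
  generalize blowupExponent N m γ = κ at *
  have hm' : m - 1 ≠ 0 := sub_ne_zero.2 hm
  set b := κ / (m * (2 - γ) * ((N : ℝ) - γ)) with hbdef
  have hcoeff : b = κ * b + m / (m - 1) * (b * (2 - γ)) ^ 2 := by
    calc b = b * (κ * (1 + (2 - γ) / (((N : ℝ) - γ) * (m - 1)))) := by rw [hbalance, mul_one]
      _ = κ * b + m / (m - 1) * (b * (2 - γ)) ^ 2 := by rw [hbdef]; field_simp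
  clear_value b
  generalize T - t = τ
  linear_combination (‖x‖ ^ (-γ) * ‖x‖ ^ (2 - γ) / τ ^ 2) * hcoeff

theorem explicit_blowup_solution_general (hm : m ≠ 1) (hb : m * (2 - γ) * ((N : ℝ) - γ) ≠ 0)
    (hκ : ((N : ℝ) - γ) * (m - 1) + 2 - γ ≠ 0) (hx : x ≠ 0) (ht : t < T)
    (hpos : 0 < blowupPressure m γ T A x t) :
    let U : Euc N → ℝ → ℝ := fun y s => blowupPressure m γ T A y s ^ (1 / (m - 1))
    ContDiffAt ℝ (⊤ : ℕ∞) (fun p : Euc N × ℝ => U p.1 p.2) (x, t) ∧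
      ‖x‖ ^ (-γ) * deriv (fun s => U x s) t = lap (fun y => U y t ^ m) x := by
  intro U
  have hspace {f : Euc N → ℝ → ℝ} (hf : ContDiffAt ℝ 2 (fun p : Euc N × ℝ => f p.1 p.2) (x, t)) :
      ContDiffAt ℝ 2 (fun y => f y t) x :=
    ContDiffAt.comp (g := fun p : Euc N × ℝ => f p.1 p.2) x hf
      (contDiffAt_id.prodMk contDiffAt_const)
  have hV {n} := contDiffAt_blowupPressure (n := n) (m := m) (γ := γ) (A := A) hx ht
  have hU {n} : ContDiffAt ℝ n (fun p : Euc N × ℝ => U p.1 p.2) (x, t) :=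
    hV.rpow_const_of_ne hpos.ne'
  have hVt : DifferentiableAt ℝ (blowupPressure m γ T A x) t :=
    ((hV (n := 1)).comp t (contDiffAt_const.prodMk contDiffAt_id)).differentiableAt_one
  refine ⟨hU, ?_⟩
  rw [lap_eq_laplacian ((hspace hU).rpow_const_of_ne (Real.rpow_pos_of_pos hpos _).ne')]
  exact mul_deriv_eq_laplacian_of_pressure hm (hspace hV) hVt hpos
    (blowupPressure_equation hm hb hκ hx ht)

end BlowupPressure

open MeasureTheory Metric Filter Set ENNReal in
/-- **Explicit blow-up solution for the straight-power weight** `ρ(x) = |x|^{-γ}`: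
the function `u(x,t) = [a T^κ (T-t)^{-κ} + (κ/(m(2-γ)(N-γ))) |x|^{2-γ}/(T-t)]^{1/(m-1)}`
is smooth away from `x = 0` and solves `|x|^{-γ} u_t = Δ(u^m)` there. -/
theorem explicit_blowup_solution
    (N : ℕ) (hN : 3 ≤ N) (m γ T a : ℝ)
    (hm : 1 < m) (hγ0 : 0 < γ) (hγ2 : γ < 2) (hT : 0 < T) (ha : 0 ≤ a) :
    let κ : ℝ := ((N : ℝ) - γ) * (m - 1) / (((N : ℝ) - γ) * (m - 1) + 2 - γ)
    let U : Euc N → ℝ → ℝ := fun x t =>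
      (a * T ^ κ * (T - t) ^ (-κ) +
        κ / (m * (2 - γ) * ((N : ℝ) - γ)) * ‖x‖ ^ (2 - γ) / (T - t)) ^ (1 / (m - 1))
    ∀ x : Euc N, x ≠ 0 → ∀ t : ℝ, 0 < t → t < T →
      ContDiffAt ℝ (⊤ : ℕ∞) (fun p : Euc N × ℝ => U p.1 p.2) (x, t) ∧
      ‖x‖ ^ (-γ) * deriv (fun s => U x s) t = lap (fun y => U y t ^ m) x := by
  have hγN : γ < N := hγ2.trans (by exact_mod_cast hN)
  exact fun x hx t _ htT => explicit_blowup_solution_general hm.ne'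
    (blowupPressure_denom_pos (one_pos.trans hm) hγ2 hγN).ne'
    (blowupExponent_denom_pos hm hγ2 hγN).ne' hx htT
    (blowupPressure_pos hm hγ2 hγN (by positivity) hx htT)
end

section
/- Let N ≥ 3, m > 1, γ ∈ [0,2), 0 < k ≤ K, and let ρ : (0,∞) → ℝ be measurable with k(1+y)^{−γ} ≤ ρ(y) ≤ K y^{−γ} for a.e. y > 0. Then for every β > 0 there exists a continuous, strictly increasing function V : [0,∞) → ℝ with V(0) = β^m, V(y) ≥ β^m for all y ≥ 0, satisfying the integral equation V(y) = β^m + ∫₀^y z^{−(N−1)} ( ∫₀^z ζ^{N−1} ρ(ζ) V(ζ)^{1/m} dζ ) dz for all y ≥ 0. -/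
open MeasureTheory Metric Filter Set ENNReal

/-!
With `g(z) = z^{-(N-1)}` and `w(ζ) = ζ^{N-1} ρ(ζ)` the equation reads `V = T V`, where
`T V (y) = β^m + ∫₀^y g (∫₀^z w V^{1/m})`. On `[0, ∞]`-valued functions `T` is defined without any
integrability requirement and is monotone, so it has a least fixed point by Knaster–Tarski.
Since `ρ(y) ≤ K y^{-γ}` and `γ < 2`, the integral `A(R) = ∫₀^R g (∫₀^z w)` is finite; since
`1/m < 1`, some finite `M` satisfies `β^m + A(R) M^{1/m} ≤ M`. The function equal to `M` on
`(-∞, R]` and to `∞` beyond is then a supersolution, so the least fixed point is at most `M` on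
`(-∞, R]`, hence finite everywhere, and it solves the real equation.
-/

section Preliminaries

theorem setLIntegral_pos_of_ae_pos {α : Type*} [MeasurableSpace α] {μ : Measure α} {s : Set α}
    (hs : μ s ≠ 0) {h : α → ℝ≥0∞} (hh : AEMeasurable h (μ.restrict s))
    (hpos : ∀ᵐ x ∂μ.restrict s, 0 < h x) : 0 < ∫⁻ x in s, h x ∂μ := by
  have : NeZero (μ.restrict s) := ⟨by simpa using hs⟩
  rw [pos_iff_ne_zero, Ne, lintegral_eq_zero_iff' hh]
  intro hzero
  obtain ⟨x, hx, hx0⟩ := (hpos.and hzero).exists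
  exact hx.ne' hx0

theorem intervalIntegral_toReal {μ : Measure ℝ} {h : ℝ → ℝ≥0∞} {a b : ℝ} (hab : a ≤ b)
    (hh : AEMeasurable h (μ.restrict (Ioc a b))) (hfin : ∫⁻ x in Ioc a b, h x ∂μ ≠ ⊤) :
    ∫ x in a..b, (h x).toReal ∂μ = (∫⁻ x in Ioc a b, h x ∂μ).toReal := by
  rw [intervalIntegral.integral_of_le hab, integral_toReal hh (ae_lt_top' hh hfin)]

theorem intervalIntegral_toReal_ofReal_mul {μ : Measure ℝ} {w : ℝ → ℝ} {a b : ℝ} (hab : a ≤ b)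
    (hw : ∀ᵐ x ∂μ.restrict (Ioc a b), 0 ≤ w x) (h : ℝ → ℝ) :
    ∫ x in a..b, (ENNReal.ofReal (w x)).toReal * h x ∂μ = ∫ x in a..b, w x * h x ∂μ := by
  refine intervalIntegral.integral_congr_ae_restrict ?_
  rw [uIoc_of_le hab]
  filter_upwards [hw] with x hx
  rw [ENNReal.toReal_ofReal hx]

theorem continuousOn_Ici_intervalIntegral {E : Type*} [NormedAddCommGroup E] [NormedSpace ℝ E]
    {μ : Measure ℝ} [NullSingletonClass μ] {h : ℝ → E} {a : ℝ}
    (hint : ∀ b, IntegrableOn h (Ioc a b) μ) :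
    ContinuousOn (fun y => ∫ x in a..y, h x ∂μ) (Ici a) := by
  intro y (hy : a ≤ y)
  have hay : a ≤ y + 1 := by linarith
  have hIcc : ContinuousWithinAt (fun y => ∫ x in a..y, h x ∂μ) (Icc a (y + 1)) y := by
    refine intervalIntegral.continuousWithinAt_primitive (measure_singleton y) ?_
    rw [min_self, max_eq_right hay]
    exact (intervalIntegrable_iff_integrableOn_Ioc_of_le hay).2 (hint _)
  refine hIcc.mono_of_mem_nhdsWithin ?_
  rw [← Ici_inter_Iic]
  exact inter_mem_nhdsWithin _ (Iic_mem_nhds (lt_add_one y))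

theorem exists_add_mul_rpow_le {q : ℝ} (hq0 : 0 ≤ q) (hq1 : q < 1) {a c : ℝ≥0∞} (ha : a ≠ ⊤)
    (hc : c ≠ ⊤) : ∃ M : ℝ≥0∞, M ≠ ⊤ ∧ c + a * M ^ q ≤ M := by
  have hq : 0 < 1 - q := sub_pos.2 hq1
  set M : ℝ≥0∞ := (1 + c + a) ^ (1 - q)⁻¹
  have hM_top : M ≠ ⊤ := ENNReal.rpow_ne_top_of_nonneg (by positivity) (by finiteness)
  have hM_one : 1 ≤ M := ENNReal.one_le_rpow (by rw [add_assoc]; exact le_self_add) (by positivity)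
  have hM_ne_zero : M ≠ 0 := (zero_lt_one.trans_le hM_one).ne'
  refine ⟨M, hM_top, ?_⟩
  calc c + a * M ^ q ≤ (1 + c) * M ^ q + a * M ^ q := by
        gcongr
        calc c ≤ (1 + c) * 1 := by rw [mul_one]; exact le_add_self
          _ ≤ (1 + c) * M ^ q := by gcongr; simpa using ENNReal.rpow_le_rpow hM_one hq0
    _ = M ^ (1 - q) * M ^ q := by rw [← add_mul, ENNReal.rpow_inv_rpow hq.ne']
    _ = M := by rw [← ENNReal.rpow_add _ _ hM_ne_zero hM_top, sub_add_cancel, ENNReal.rpow_one]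

end Preliminaries

section IntegralEquation

variable {c : ℝ≥0∞} {g w : ℝ → ℝ≥0∞} {f : ℝ≥0∞ →o ℝ≥0∞} {V : ℝ → ℝ≥0∞}

/-- The inner integral of the integral equation, with a general nonlinearity `f` in place of
`V ↦ V^{1/m}`. For `w(ζ) = ζ^{N-1} ρ(ζ)` it is the radial flux `z^{N-1} V'(z)`. -/
noncomputable def flux (w : ℝ → ℝ≥0∞) (f : ℝ≥0∞ →o ℝ≥0∞) (V : ℝ → ℝ≥0∞) (z : ℝ) : ℝ≥0∞ :=
  ∫⁻ ζ in Ioc 0 z, w ζ * f (V ζ)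

/-- The operator whose fixed points are the solutions of the integral equation. Values are taken in
`[0, ∞]`, so that it acts on all functions, and functions live on the whole line: the image of any
function is equal to `c` on `(-∞, 0]`. -/
noncomputable def iteratedIntegralOp (c : ℝ≥0∞) (g w : ℝ → ℝ≥0∞) (f : ℝ≥0∞ →o ℝ≥0∞) :
    (ℝ → ℝ≥0∞) →o (ℝ → ℝ≥0∞) where
  toFun V y := c + ∫⁻ z in Ioc 0 y, g z * flux w f V z
  monotone' U V hUV y := by
    simp only [flux]
    gcongr with z ζ
    exact hUV ζ

/-- `V` solves the integral equation `V(y) = c + ∫₀^y g(z) (∫₀^z w(ζ) f(V(ζ)) dζ) dz` in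
`[0, ∞]`. -/
def IsIntegralSol (c : ℝ≥0∞) (g w : ℝ → ℝ≥0∞) (f : ℝ≥0∞ →o ℝ≥0∞) (V : ℝ → ℝ≥0∞) : Prop :=
  ∀ y, V y = c + ∫⁻ z in Ioc 0 y, g z * flux w f V z

theorem flux_mono : Monotone (flux w f V) := fun _ _ hab =>
  lintegral_mono_set (Ioc_subset_Ioc_right hab)

theorem flux_le_of_le (hw : Measurable w) {M : ℝ≥0∞} {z : ℝ} (hVM : ∀ ζ ≤ z, V ζ ≤ M) :
    flux w f V z ≤ (∫⁻ ζ in Ioc 0 z, w ζ) * f M := by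
  rw [← lintegral_mul_const _ hw]
  refine setLIntegral_mono' measurableSet_Ioc fun ζ hζ => ?_
  gcongr
  exact hVM ζ hζ.2

theorem lfp_iteratedIntegralOp_le (hg : Measurable g) (hw : Measurable w) {M : ℝ≥0∞} {R : ℝ}
    (hM : c + (∫⁻ z in Ioc 0 R, g z * ∫⁻ ζ in Ioc 0 z, w ζ) * f M ≤ M) {y : ℝ} (hy : y ≤ R) :
    (iteratedIntegralOp c g w f).lfp y ≤ M := by
  classical
  have hmeas : Measurable fun z => g z * ∫⁻ ζ in Ioc 0 z, w ζ :=
    hg.mul (Monotone.measurable fun _ _ hab => lintegral_mono_set (Ioc_subset_Ioc_right hab))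
  let U : ℝ → ℝ≥0∞ := fun x => if x ≤ R then M else ⊤
  have hU : ∀ x ≤ R, U x = M := fun _ hx => if_pos hx
  have hU_super : iteratedIntegralOp c g w f U ≤ U := by
    intro x
    rcases lt_or_ge R x with hx | hx
    · exact le_top.trans_eq (if_neg hx.not_ge).symm
    calc iteratedIntegralOp c g w f U x
        = c + ∫⁻ z in Ioc 0 x, g z * flux w f U z := rfl
      _ ≤ c + ∫⁻ z in Ioc 0 R, g z * flux w f U z := by gcongr
      _ ≤ c + ∫⁻ z in Ioc 0 R, (g z * ∫⁻ ζ in Ioc 0 z, w ζ) * f M := by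
          gcongr c + ?_
          refine setLIntegral_mono' measurableSet_Ioc fun z hz => ?_
          rw [mul_assoc]
          gcongr
          exact flux_le_of_le hw fun ζ hζ => (hU ζ (hζ.trans hz.2)).le
      _ = c + (∫⁻ z in Ioc 0 R, g z * ∫⁻ ζ in Ioc 0 z, w ζ) * f M := by
          rw [lintegral_mul_const _ hmeas]
      _ ≤ U x := hM.trans_eq (hU x hx).symm
  exact ((iteratedIntegralOp c g w f).lfp_le hU_super y).trans_eq (hU y hy)

theorem exists_isIntegralSol_ne_top (hg : Measurable g) (hw : Measurable w)
    (hgw : ∀ R, ∫⁻ z in Ioc 0 R, g z * ∫⁻ ζ in Ioc 0 z, w ζ ≠ ⊤)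
    (hf : ∀ a : ℝ≥0∞, a ≠ ⊤ → ∃ M : ℝ≥0∞, M ≠ ⊤ ∧ c + a * f M ≤ M) :
    ∃ V, IsIntegralSol c g w f V ∧ ∀ y, V y ≠ ⊤ := by
  refine ⟨(iteratedIntegralOp c g w f).lfp,
    fun y => (congrFun (iteratedIntegralOp c g w f).map_lfp y).symm, fun y => ?_⟩
  obtain ⟨M, hM_top, hM⟩ := hf _ (hgw y)
  exact ne_top_of_le_ne_top hM_top (lfp_iteratedIntegralOp_le hg hw hM le_rfl)

namespace IsIntegralSol

theorem apply_zero (hV : IsIntegralSol c g w f V) : V 0 = c := by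
  rw [hV 0, Ioc_self, setLIntegral_empty, add_zero]

theorem le_apply (hV : IsIntegralSol c g w f V) (y : ℝ) : c ≤ V y := by
  rw [hV y]
  exact le_self_add

theorem monotone (hV : IsIntegralSol c g w f V) : Monotone V := fun a b hab => by
  rw [hV a, hV b]
  gcongr

theorem measurable_mul_comp (hV : IsIntegralSol c g w f V) (hw : Measurable w) :
    Measurable fun ζ => w ζ * f (V ζ) :=
  hw.mul (f.monotone.comp hV.monotone).measurable

theorem flux_pos (hV : IsIntegralSol c g w f V) (hw : Measurable w)
    (hw_pos : ∀ᵐ y ∂volume.restrict (Ioi 0), 0 < w y) (hfc : 0 < f c) {z : ℝ} (hz : 0 < z) :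
    0 < flux w f V z := by
  refine setLIntegral_pos_of_ae_pos (by simpa using hz) (hV.measurable_mul_comp hw).aemeasurable ?_
  filter_upwards [ae_restrict_of_ae_restrict_of_subset Ioc_subset_Ioi_self hw_pos] with ζ hζ
  exact ENNReal.mul_pos hζ.ne' (hfc.trans_le (f.monotone (hV.le_apply ζ))).ne'

theorem lintegral_ne_top (hV : IsIntegralSol c g w f V) (hV_top : ∀ y, V y ≠ ⊤) (y : ℝ) :
    ∫⁻ z in Ioc 0 y, g z * flux w f V z ≠ ⊤ :=
  ne_top_of_le_ne_top (hV_top y) (by rw [hV y]; exact le_add_self)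

/- Finiteness of `∫ g * flux` bounds the flux only almost everywhere; monotonicity carries the
finiteness over from a later point. -/
theorem flux_ne_top (hV : IsIntegralSol c g w f V) (hV_top : ∀ y, V y ≠ ⊤) (hg : Measurable g)
    (hg_pos : ∀ᵐ y ∂volume.restrict (Ioi 0), 0 < g y) {z : ℝ} (hz : 0 ≤ z) :
    flux w f V z ≠ ⊤ := by
  have : NeZero (volume.restrict (Ioc z (z + 1))) := ⟨by simp⟩
  have h_lt_top : ∀ᵐ x ∂volume.restrict (Ioc z (z + 1)), g x * flux w f V x < ⊤ :=
    ae_restrict_of_ae_restrict_of_subset (Ioc_subset_Ioc_left hz)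
      (ae_lt_top (hg.mul flux_mono.measurable) (hV.lintegral_ne_top hV_top _))
  have h_pos : ∀ᵐ x ∂volume.restrict (Ioc z (z + 1)), 0 < g x :=
    ae_restrict_of_ae_restrict_of_subset (fun x hx => hz.trans_lt hx.1) hg_pos
  obtain ⟨x, hx_mem, hx_lt_top, hx_pos⟩ :=
    ((ae_restrict_mem measurableSet_Ioc).and (h_lt_top.and h_pos)).exists
  exact ne_top_of_le_ne_top (ENNReal.lt_top_of_mul_ne_top_right hx_lt_top.ne hx_pos.ne').ne
    (flux_mono hx_mem.1.le)

theorem strictMonoOn (hV : IsIntegralSol c g w f V) (hV_top : ∀ y, V y ≠ ⊤) (hg : Measurable g)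
    (hw : Measurable w) (hg_pos : ∀ᵐ y ∂volume.restrict (Ioi 0), 0 < g y)
    (hw_pos : ∀ᵐ y ∂volume.restrict (Ioi 0), 0 < w y) (hfc : 0 < f c) :
    StrictMonoOn V (Ici 0) := by
  intro a (ha : 0 ≤ a) b _ hab
  have hsub : Ioc a b ⊆ Ioi 0 := fun x hx => ha.trans_lt hx.1
  have hincr : 0 < ∫⁻ z in Ioc a b, g z * flux w f V z := by
    refine setLIntegral_pos_of_ae_pos (by simpa using hab)
      (hg.mul flux_mono.measurable).aemeasurable ?_
    filter_upwards [ae_restrict_of_ae_restrict_of_subset hsub hg_pos,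
      ae_restrict_mem measurableSet_Ioc] with z hgz hz
    exact ENNReal.mul_pos hgz.ne' (hV.flux_pos hw hw_pos hfc (hsub hz)).ne'
  calc V a < V a + ∫⁻ z in Ioc a b, g z * flux w f V z :=
        ENNReal.lt_add_right (hV_top a) hincr.ne'
    _ = V b := by
        rw [hV a, hV b, add_assoc,
          ← lintegral_union measurableSet_Ioc (Ioc_disjoint_Ioc_of_le le_rfl),
          Ioc_union_Ioc_eq_Ioc ha hab.le]

theorem toReal_eq_add_integral_toReal (hV : IsIntegralSol c g w f V) (hV_top : ∀ y, V y ≠ ⊤)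
    (hg : Measurable g) {y : ℝ} (hy : 0 ≤ y) :
    (V y).toReal = c.toReal + ∫ z in (0 : ℝ)..y, (g z * flux w f V z).toReal := by
  have hc : c ≠ ⊤ := ne_top_of_le_ne_top (hV_top 0) (hV.le_apply 0)
  have hfin := hV.lintegral_ne_top hV_top y
  calc (V y).toReal = c.toReal + (∫⁻ z in Ioc 0 y, g z * flux w f V z).toReal := by
        rw [← ENNReal.toReal_add hc hfin, ← hV y]
    _ = c.toReal + ∫ z in (0 : ℝ)..y, (g z * flux w f V z).toReal := by
        congr 1
        exact (intervalIntegral_toReal hy (hg.mul flux_mono.measurable).aemeasurable hfin).symm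

theorem toReal_flux (hV : IsIntegralSol c g w f V) (hV_top : ∀ y, V y ≠ ⊤) (hg : Measurable g)
    (hw : Measurable w) (hg_pos : ∀ᵐ y ∂volume.restrict (Ioi 0), 0 < g y) {z : ℝ} (hz : 0 ≤ z) :
    (flux w f V z).toReal = ∫ ζ in (0 : ℝ)..z, (w ζ).toReal * (f (V ζ)).toReal := by
  simp only [← ENNReal.toReal_mul]
  exact (intervalIntegral_toReal hz (hV.measurable_mul_comp hw).aemeasurable
    (hV.flux_ne_top hV_top hg hg_pos hz)).symm

theorem toReal_eq (hV : IsIntegralSol c g w f V) (hV_top : ∀ y, V y ≠ ⊤) (hg : Measurable g)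
    (hw : Measurable w) (hg_pos : ∀ᵐ y ∂volume.restrict (Ioi 0), 0 < g y) {y : ℝ} (hy : 0 ≤ y) :
    (V y).toReal = c.toReal + ∫ z in (0 : ℝ)..y,
      (g z).toReal * ∫ ζ in (0 : ℝ)..z, (w ζ).toReal * (f (V ζ)).toReal := by
  rw [hV.toReal_eq_add_integral_toReal hV_top hg hy]
  congr 1
  refine intervalIntegral.integral_congr fun z hz => ?_
  rw [uIcc_of_le hy] at hz
  simp only [ENNReal.toReal_mul, hV.toReal_flux hV_top hg hw hg_pos hz.1]

theorem continuousOn_toReal (hV : IsIntegralSol c g w f V) (hV_top : ∀ y, V y ≠ ⊤)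
    (hg : Measurable g) : ContinuousOn (fun y => (V y).toReal) (Ici 0) := by
  have hint (R : ℝ) : IntegrableOn (fun z => (g z * flux w f V z).toReal) (Ioc 0 R) :=
    integrable_toReal_of_lintegral_ne_top (hg.mul flux_mono.measurable).aemeasurable
      (hV.lintegral_ne_top hV_top R)
  exact (continuousOn_const.add (continuousOn_Ici_intervalIntegral hint)).congr
    fun y hy => hV.toReal_eq_add_integral_toReal hV_top hg hy

end IsIntegralSol

/-- The nonlinearity `x ↦ x ^ q`, bundled with its monotonicity. -/
noncomputable def rpowOrderHom {q : ℝ} (hq : 0 ≤ q) : ℝ≥0∞ →o ℝ≥0∞ :=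
  ⟨fun x => x ^ q, ENNReal.monotone_rpow_of_nonneg hq⟩

theorem exists_strictMonoOn_eq_add_iterated_integral {g w : ℝ → ℝ} (hg : Measurable g)
    (hw : Measurable w) (hg_pos : ∀ᵐ y ∂volume.restrict (Ioi 0), 0 < g y)
    (hw_pos : ∀ᵐ y ∂volume.restrict (Ioi 0), 0 < w y)
    (hgw : ∀ R, ∫⁻ z in Ioc 0 R, ENNReal.ofReal (g z) *
      ∫⁻ ζ in Ioc 0 z, ENNReal.ofReal (w ζ) ≠ ⊤)
    {q : ℝ} (hq0 : 0 ≤ q) (hq1 : q < 1) {c : ℝ} (hc : 0 < c) :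
    ∃ V : ℝ → ℝ,
      ContinuousOn V (Ici 0) ∧ StrictMonoOn V (Ici 0) ∧ V 0 = c ∧ (∀ y, 0 ≤ y → c ≤ V y) ∧
      ∀ y, 0 ≤ y → V y = c + ∫ z in (0 : ℝ)..y, g z * ∫ ζ in (0 : ℝ)..z, w ζ * V ζ ^ q := by
  have hg' := hg.ennreal_ofReal
  have hw' := hw.ennreal_ofReal
  have hg_pos' := hg_pos.mono fun _ => ENNReal.ofReal_pos.2
  have hw_pos' := hw_pos.mono fun _ => ENNReal.ofReal_pos.2
  have ae_nonneg_Ioc {h : ℝ → ℝ} (hpos : ∀ᵐ y ∂volume.restrict (Ioi 0), 0 < h y) (b : ℝ) :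
      ∀ᵐ y ∂volume.restrict (Ioc 0 b), 0 ≤ h y :=
    (ae_restrict_of_ae_restrict_of_subset Ioc_subset_Ioi_self hpos).mono fun _ => le_of_lt
  have hfc : 0 < rpowOrderHom hq0 (ENNReal.ofReal c) :=
    ENNReal.rpow_pos (ENNReal.ofReal_pos.2 hc) ENNReal.ofReal_ne_top
  obtain ⟨V, hV, hV_top⟩ := exists_isIntegralSol_ne_top (f := rpowOrderHom hq0) hg' hw' hgw
    fun _ ha => exists_add_mul_rpow_le hq0 hq1 ha (ENNReal.ofReal_ne_top (r := c))
  refine ⟨fun y => (V y).toReal, hV.continuousOn_toReal hV_top hg', ?_, ?_, ?_, ?_⟩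
  · intro a ha b hb hab
    exact ENNReal.toReal_strict_mono (hV_top b)
      (hV.strictMonoOn hV_top hg' hw' hg_pos' hw_pos' hfc ha hb hab)
  · simp only [hV.apply_zero, ENNReal.toReal_ofReal hc.le]
  · exact fun y _ => (ENNReal.ofReal_le_iff_le_toReal (hV_top y)).1 (hV.le_apply y)
  · intro y hy
    simp only [hV.toReal_eq hV_top hg' hw' hg_pos' hy, ENNReal.toReal_ofReal hc.le,
      intervalIntegral_toReal_ofReal_mul hy (ae_nonneg_Ioc hg_pos y), ENNReal.toReal_rpow]
    congr 1
    refine intervalIntegral.integral_congr fun z hz => ?_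
    rw [uIcc_of_le hy] at hz
    exact congrArg (g z * ·) (intervalIntegral_toReal_ofReal_mul hz.1 (ae_nonneg_Ioc hw_pos z) _)

end IntegralEquation

section PowerWeight

theorem setLIntegral_Ioc_ofReal_rpow {s : ℝ} (hs : -1 < s) {R : ℝ} (hR : 0 ≤ R) :
    ∫⁻ z in Ioc 0 R, ENNReal.ofReal (z ^ s) = ENNReal.ofReal (R ^ (s + 1) / (s + 1)) := by
  have hint : IntegrableOn (fun z : ℝ => z ^ s) (Ioc 0 R) :=
    (intervalIntegrable_iff_integrableOn_Ioc_of_le hR).1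
      (intervalIntegral.intervalIntegrable_rpow' hs)
  have hnonneg : 0 ≤ᵐ[volume.restrict (Ioc 0 R)] fun z : ℝ => z ^ s := by
    filter_upwards [ae_restrict_mem measurableSet_Ioc] with z hz
    exact Real.rpow_nonneg hz.1.le s
  rw [← ofReal_integral_eq_lintegral_ofReal hint hnonneg, ← intervalIntegral.integral_of_le hR,
    integral_rpow (Or.inl hs), Real.zero_rpow (by linarith), sub_zero]

variable {d γ K : ℝ} {ρ : ℝ → ℝ}

theorem lintegral_rpow_mul_weight_le (hγd : γ < d)
    (hρ : ∀ᵐ y ∂volume.restrict (Ioi 0), ρ y ≤ K * y ^ (-γ)) {z : ℝ} (hz : 0 ≤ z) :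
    ∫⁻ ζ in Ioc 0 z, ENNReal.ofReal (ζ ^ (d - 1) * ρ ζ) ≤
      ENNReal.ofReal K * ENNReal.ofReal (z ^ (d - γ) / (d - γ)) := by
  have hle : ∀ᵐ ζ ∂volume.restrict (Ioc 0 z), ENNReal.ofReal (ζ ^ (d - 1) * ρ ζ) ≤
      ENNReal.ofReal K * ENNReal.ofReal (ζ ^ (d - γ - 1)) := by
    filter_upwards [ae_restrict_of_ae_restrict_of_subset Ioc_subset_Ioi_self hρ,
      ae_restrict_mem measurableSet_Ioc] with ζ hρζ hζ
    rw [← ENNReal.ofReal_mul' (Real.rpow_nonneg hζ.1.le _)]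
    refine ENNReal.ofReal_le_ofReal ?_
    calc ζ ^ (d - 1) * ρ ζ ≤ ζ ^ (d - 1) * (K * ζ ^ (-γ)) :=
          mul_le_mul_of_nonneg_left hρζ (Real.rpow_nonneg hζ.1.le _)
      _ = K * (ζ ^ (d - 1) * ζ ^ (-γ)) := by ring
      _ = K * ζ ^ (d - γ - 1) := by rw [← Real.rpow_add hζ.1]; ring_nf
  calc ∫⁻ ζ in Ioc 0 z, ENNReal.ofReal (ζ ^ (d - 1) * ρ ζ)
      ≤ ∫⁻ ζ in Ioc 0 z, ENNReal.ofReal K * ENNReal.ofReal (ζ ^ (d - γ - 1)) :=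
        lintegral_mono_ae hle
    _ = ENNReal.ofReal K * ENNReal.ofReal (z ^ (d - γ) / (d - γ)) := by
        rw [lintegral_const_mul' _ _ ENNReal.ofReal_ne_top,
          setLIntegral_Ioc_ofReal_rpow (by linarith) hz, sub_add_cancel]

theorem lintegral_rpow_mul_lintegral_weight_ne_top (hγ2 : γ < 2) (hγd : γ < d)
    (hρ : ∀ᵐ y ∂volume.restrict (Ioi 0), ρ y ≤ K * y ^ (-γ)) (R : ℝ) :
    ∫⁻ z in Ioc 0 R, ENNReal.ofReal (z ^ (-(d - 1))) *
      ∫⁻ ζ in Ioc 0 z, ENNReal.ofReal (ζ ^ (d - 1) * ρ ζ) ≠ ⊤ := by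
  rcases lt_or_ge R 0 with hR | hR
  · simp [Ioc_eq_empty_of_le hR.le]
  have hfin : ∫⁻ z in Ioc 0 R, ENNReal.ofReal (K / (d - γ)) * ENNReal.ofReal (z ^ (1 - γ)) ≠ ⊤ := by
    rw [lintegral_const_mul' _ _ ENNReal.ofReal_ne_top,
      setLIntegral_Ioc_ofReal_rpow (by linarith) hR]
    finiteness
  refine ne_top_of_le_ne_top hfin (setLIntegral_mono' measurableSet_Ioc fun z hz => ?_)
  have hz_nonneg (s : ℝ) : 0 ≤ z ^ s := Real.rpow_nonneg hz.1.le s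
  calc ENNReal.ofReal (z ^ (-(d - 1))) * ∫⁻ ζ in Ioc 0 z, ENNReal.ofReal (ζ ^ (d - 1) * ρ ζ)
      ≤ ENNReal.ofReal (z ^ (-(d - 1))) *
          (ENNReal.ofReal K * ENNReal.ofReal (z ^ (d - γ) / (d - γ))) := by
        gcongr
        exact lintegral_rpow_mul_weight_le hγd hρ hz.1.le
    _ = ENNReal.ofReal (K / (d - γ) * (z ^ (-(d - 1)) * z ^ (d - γ))) := by
        rw [← ENNReal.ofReal_mul' (div_nonneg (hz_nonneg _) (sub_pos.2 hγd).le),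
          ← ENNReal.ofReal_mul (hz_nonneg _)]
        ring_nf
    _ = ENNReal.ofReal (K / (d - γ)) * ENNReal.ofReal (z ^ (1 - γ)) := by
        rw [← Real.rpow_add hz.1, ENNReal.ofReal_mul' (hz_nonneg _)]
        ring_nf

end PowerWeight

theorem radial_ode_existence_general {d q γ K : ℝ} (hq0 : 0 ≤ q) (hq1 : q < 1) (hγ2 : γ < 2)
    (hγd : γ < d) {ρ : ℝ → ℝ} (hρm : Measurable ρ)
    (hρ : ∀ᵐ y ∂volume.restrict (Ioi (0 : ℝ)), 0 < ρ y ∧ ρ y ≤ K * y ^ (-γ)) {c : ℝ} (hc : 0 < c) :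
    ∃ V : ℝ → ℝ,
      ContinuousOn V (Ici 0) ∧ StrictMonoOn V (Ici 0) ∧ V 0 = c ∧ (∀ y, 0 ≤ y → c ≤ V y) ∧
      ∀ y, 0 ≤ y → V y = c +
        ∫ z in (0 : ℝ)..y, z ^ (-(d - 1)) * ∫ ζ in (0 : ℝ)..z, ζ ^ (d - 1) * ρ ζ * V ζ ^ q := by
  refine exists_strictMonoOn_eq_add_iterated_integral (by fun_prop) (by fun_prop) ?_ ?_
    (lintegral_rpow_mul_lintegral_weight_ne_top hγ2 hγd (hρ.mono fun _ h => h.2)) hq0 hq1 hc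
  · filter_upwards [ae_restrict_mem measurableSet_Ioi] with y hy
    exact Real.rpow_pos_of_pos hy _
  · filter_upwards [hρ, ae_restrict_mem measurableSet_Ioi] with y hρy hy
    exact mul_pos (Real.rpow_pos_of_pos hy _) hρy.1

open MeasureTheory Metric Filter Set ENNReal in
/-- **Existence for the radial elliptic ODE** (Step 1 of the proof of Proposition 2.7 of
Muratori–Petitt): for every `β > 0` the integral equation
`V(y) = β^m + ∫₀^y z^{-(N-1)} ∫₀^z ζ^{N-1} ρ(ζ) V(ζ)^{1/m} dζ dz` has a continuous,
strictly increasing global solution with `V(0) = β^m` and `V ≥ β^m`. -/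
theorem radial_ode_existence
    (N : ℕ) (hN : 3 ≤ N) (m γ k K : ℝ)
    (hm : 1 < m) (hγ0 : 0 ≤ γ) (hγ2 : γ < 2) (hk : 0 < k) (hkK : k ≤ K)
    (ρ : ℝ → ℝ) (hρm : Measurable ρ)
    (hρ : ∀ᵐ y ∂(volume.restrict (Ioi (0 : ℝ))),
      k * (1 + y) ^ (-γ) ≤ ρ y ∧ ρ y ≤ K * y ^ (-γ)) :
    ∀ β : ℝ, 0 < β →
      ∃ V : ℝ → ℝ,
        ContinuousOn V (Ici 0) ∧ StrictMonoOn V (Ici 0) ∧ V 0 = β ^ m ∧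
        (∀ y : ℝ, 0 ≤ y → β ^ m ≤ V y) ∧
        (∀ y : ℝ, 0 ≤ y → V y = β ^ m +
          ∫ z in (0 : ℝ)..y, z ^ (-((N : ℝ) - 1)) *
            ∫ ζ in (0 : ℝ)..z, ζ ^ ((N : ℝ) - 1) * ρ ζ * V ζ ^ (1 / m)) := by
  intro β hβ
  refine radial_ode_existence_general (K := K) (by positivity) ((div_lt_one (by positivity)).2 hm)
    hγ2 (hγ2.trans (by exact_mod_cast hN)) hρm ?_ (Real.rpow_pos_of_pos hβ m)
  filter_upwards [hρ, ae_restrict_mem measurableSet_Ioi] with y hρy (hy : 0 < y)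
  exact ⟨lt_of_lt_of_le (by positivity) hρy.1, hρy.2⟩
end

section
/- Let N ≥ 3, m > 1, γ ∈ [0,2), 0 < k ≤ K, and let ρ : (0,∞) → ℝ be measurable with k(1+y)^{−γ} ≤ ρ(y) ≤ K y^{−γ} for a.e. y > 0. Let β > 0 and let V : [0,∞) → ℝ be a continuous nonnegative function satisfying V(y) = β^m + ∫₀^y z^{−(N−1)} ( ∫₀^z ζ^{N−1} ρ(ζ) V(ζ)^{1/m} dζ ) dz for all y ≥ 0. Then limsup_{y→+∞} V(y) / y^{(2−γ)m/(m−1)} ≤ [ (m−1)K / (m(N−γ)(2−γ)) ]^{m/(m−1)}. -/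
open MeasureTheory Metric Filter Set ENNReal

/-!
A solution `V` is nondecreasing, since its flux `V' = z^{1-N} ∫₀^z ζ^{N-1} ρ V^{1/m}` is
nonnegative. Bounding `V ζ` by `V z` and `ρ ζ` by `K ζ^{-γ}` inside the flux gives the differential
inequality `V' ≤ K/(N-γ) · z^{1-γ} V^{1/m}`. It is separable: with `p = (m-1)/m` it reads
`(V^p)' ≤ pK/(N-γ) · z^{1-γ}`, and integration yields `V^p ≤ V(0)^p + A y^{2-γ}` with
`A = (m-1)K/(m(N-γ)(2-γ))`.
-/

section RadialPotential

/-- The derivative at `z` of the radial solution `u` of `Δu = h` in dimension `d` with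
`u'(0) = 0`. The dimension may be any real number. -/
noncomputable def radialFlux (d : ℝ) (h : ℝ → ℝ) (z : ℝ) : ℝ :=
  z ^ (-(d - 1)) * ∫ ζ in (0 : ℝ)..z, ζ ^ (d - 1) * h ζ

/-- The radial solution of `Δu = h` in (real) dimension `d` with `u(0) = u'(0) = 0`, as a function
of the radius. -/
noncomputable def radialPotential (d : ℝ) (h : ℝ → ℝ) (y : ℝ) : ℝ :=
  ∫ z in (0 : ℝ)..y, radialFlux d h z

/-- A measurable function on `(0,∞)` that is `O(ζ^{-γ})` on every bounded interval `(0,b]`. For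
`γ < d` and `γ < 2`, both integrals in `radialPotential d h` then converge. -/
structure IsLocallyRpowBounded (γ : ℝ) (h : ℝ → ℝ) : Prop where
  aestronglyMeasurable : AEStronglyMeasurable h (volume.restrict (Ioi 0))
  exists_bound : ∀ b : ℝ, ∃ M : ℝ, ∀ᵐ ζ ∂volume.restrict (Ioc 0 b), |h ζ| ≤ M * ζ ^ (-γ)

variable {d γ : ℝ} {h : ℝ → ℝ}

lemma abs_rpow_mul_le {a M ζ : ℝ} (hζ : 0 < ζ) (ha : |a| ≤ M * ζ ^ (-γ)) :
    |ζ ^ (d - 1) * a| ≤ M * ζ ^ (d - 1 - γ) := by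
  have hpos : 0 < ζ ^ (d - 1) := Real.rpow_pos_of_pos hζ _
  calc |ζ ^ (d - 1) * a| = ζ ^ (d - 1) * |a| := by rw [abs_mul, abs_of_pos hpos]
    _ ≤ ζ ^ (d - 1) * (M * ζ ^ (-γ)) := by gcongr
    _ = M * ζ ^ (d - 1 - γ) := by rw [sub_eq_add_neg _ γ, Real.rpow_add hζ]; ring

lemma radialFlux_nonneg {z : ℝ} (hz : 0 ≤ z) (hh : ∀ᵐ ζ ∂volume.restrict (Ioc 0 z), 0 ≤ h ζ) :
    0 ≤ radialFlux d h z := by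
  refine mul_nonneg (Real.rpow_nonneg hz _) ?_
  rw [intervalIntegral.integral_of_le hz]
  refine integral_nonneg_of_ae ?_
  filter_upwards [hh, ae_restrict_mem measurableSet_Ioc] with ζ hhζ hζ
  exact mul_nonneg (Real.rpow_nonneg hζ.1.le _) hhζ

lemma abs_radialFlux_le (hγd : γ < d) {M z : ℝ} (hz : 0 < z)
    (hh : ∀ᵐ ζ ∂volume.restrict (Ioc 0 z), |h ζ| ≤ M * ζ ^ (-γ)) :
    |radialFlux d h z| ≤ M / (d - γ) * z ^ (1 - γ) := by
  have hpow : ∫ ζ in (0 : ℝ)..z, M * ζ ^ (d - 1 - γ) = M * (z ^ (d - γ) / (d - γ)) := by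
    rw [intervalIntegral.integral_const_mul, integral_rpow (Or.inl (by linarith)),
      show d - 1 - γ + 1 = d - γ by ring, Real.zero_rpow (by linarith), sub_zero]
  have hmajorant : IntervalIntegrable (fun ζ => M * ζ ^ (d - 1 - γ)) volume 0 z :=
    (intervalIntegral.intervalIntegrable_rpow' (by linarith)).const_mul M
  have hmass : |∫ ζ in (0 : ℝ)..z, ζ ^ (d - 1) * h ζ| ≤ M * (z ^ (d - γ) / (d - γ)) := by
    rw [← hpow, ← Real.norm_eq_abs]
    refine intervalIntegral.norm_integral_le_of_norm_le hz.le ?_ hmajorant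
    filter_upwards [(ae_restrict_iff' measurableSet_Ioc).1 hh] with ζ hhζ hζ
    exact abs_rpow_mul_le hζ.1 (hhζ hζ)
  have hzpos : 0 < z ^ (-(d - 1)) := Real.rpow_pos_of_pos hz _
  calc |radialFlux d h z|
      = z ^ (-(d - 1)) * |∫ ζ in (0 : ℝ)..z, ζ ^ (d - 1) * h ζ| := by
        rw [radialFlux, abs_mul, abs_of_pos hzpos]
    _ ≤ z ^ (-(d - 1)) * (M * (z ^ (d - γ) / (d - γ))) := by gcongr
    _ = M / (d - γ) * z ^ (1 - γ) := by
        rw [show 1 - γ = -(d - 1) + (d - γ) by ring, Real.rpow_add hz]; ring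

namespace IsLocallyRpowBounded

lemma mul_continuousOn (hh : IsLocallyRpowBounded γ h) {φ : ℝ → ℝ}
    (hφ : ContinuousOn φ (Ici 0)) : IsLocallyRpowBounded γ (fun ζ => h ζ * φ ζ) where
  aestronglyMeasurable := hh.aestronglyMeasurable.mul
    ((hφ.mono Ioi_subset_Ici_self).aestronglyMeasurable measurableSet_Ioi)
  exists_bound b := by
    obtain ⟨M, hM⟩ := hh.exists_bound b
    obtain ⟨C, hC⟩ := isCompact_Icc.exists_bound_of_continuousOn
      (hφ.mono (fun _ hζ => hζ.1 : Icc 0 b ⊆ Ici 0))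
    refine ⟨M * C, ?_⟩
    filter_upwards [hM, ae_restrict_mem measurableSet_Ioc] with ζ hMζ hζ
    calc |h ζ * φ ζ| = |h ζ| * |φ ζ| := abs_mul _ _
      _ ≤ M * ζ ^ (-γ) * C := mul_le_mul hMζ (hC ζ (Ioc_subset_Icc_self hζ)) (abs_nonneg _)
          ((abs_nonneg _).trans hMζ)
      _ = M * C * ζ ^ (-γ) := by ring

lemma intervalIntegrable_rpow_mul (hh : IsLocallyRpowBounded γ h) (hγd : γ < d) {b : ℝ}
    (hb : 0 ≤ b) : IntervalIntegrable (fun ζ => ζ ^ (d - 1) * h ζ) volume 0 b := by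
  obtain ⟨M, hM⟩ := hh.exists_bound b
  refine ((intervalIntegral.intervalIntegrable_rpow' (r := d - 1 - γ)
    (by linarith)).const_mul M).mono_fun' ?_ ?_ <;> rw [uIoc_of_le hb]
  · exact (measurable_id.pow_const (d - 1)).aestronglyMeasurable.mul
      (hh.aestronglyMeasurable.mono_set Ioc_subset_Ioi_self)
  · filter_upwards [hM, ae_restrict_mem measurableSet_Ioc] with ζ hMζ hζ
    exact abs_rpow_mul_le hζ.1 hMζ

lemma continuousOn_radialFlux (hh : IsLocallyRpowBounded γ h) (hγd : γ < d) :
    ContinuousOn (radialFlux d h) (Ioi 0) := by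
  intro z hz
  have hz0 : (0 : ℝ) < z := hz
  have hmass := intervalIntegral.continuousOn_primitive_interval'
    (hh.intervalIntegrable_rpow_mul hγd (by linarith : 0 ≤ z + 1)) left_mem_uIcc
  rw [uIcc_of_le (by linarith : 0 ≤ z + 1)] at hmass
  exact ((Real.continuousAt_rpow_const z _ (Or.inl hz0.ne')).mul
    (hmass.continuousAt (Icc_mem_nhds hz0 (by linarith)))).continuousWithinAt

lemma intervalIntegrable_radialFlux (hh : IsLocallyRpowBounded γ h) (hγd : γ < d) (hγ2 : γ < 2)
    {b : ℝ} (hb : 0 ≤ b) : IntervalIntegrable (radialFlux d h) volume 0 b := by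
  obtain ⟨M, hM⟩ := hh.exists_bound b
  refine ((intervalIntegral.intervalIntegrable_rpow' (r := 1 - γ)
    (by linarith)).const_mul (M / (d - γ))).mono_fun' ?_ ?_ <;> rw [uIoc_of_le hb]
  · exact ((hh.continuousOn_radialFlux hγd).mono Ioc_subset_Ioi_self).aestronglyMeasurable
      measurableSet_Ioc
  · filter_upwards [ae_restrict_mem measurableSet_Ioc] with z hz
    exact abs_radialFlux_le hγd hz.1
      (ae_restrict_of_ae_restrict_of_subset (Ioc_subset_Ioc_right hz.2) hM)

lemma hasDerivAt_radialPotential (hh : IsLocallyRpowBounded γ h) (hγd : γ < d) (hγ2 : γ < 2)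
    {z : ℝ} (hz : 0 < z) : HasDerivAt (radialPotential d h) (radialFlux d h z) z :=
  have hcont := hh.continuousOn_radialFlux hγd
  intervalIntegral.integral_hasDerivAt_right (hh.intervalIntegrable_radialFlux hγd hγ2 hz.le)
    (hcont.stronglyMeasurableAtFilter isOpen_Ioi z hz) (hcont.continuousAt (Ioi_mem_nhds hz))

lemma monotoneOn_radialPotential (hh : IsLocallyRpowBounded γ h) (hγd : γ < d) (hγ2 : γ < 2)
    (hnn : ∀ᵐ ζ ∂volume.restrict (Ioi 0), 0 ≤ h ζ) :
    MonotoneOn (radialPotential d h) (Ici 0) := by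
  intro a ha b hb hab
  have hflux : ∀ z ∈ Icc a b, 0 ≤ radialFlux d h z := fun z hz =>
    radialFlux_nonneg (ha.trans hz.1)
      (ae_restrict_of_ae_restrict_of_subset Ioc_subset_Ioi_self hnn)
  rw [← sub_nonneg, radialPotential, radialPotential, intervalIntegral.integral_interval_sub_left
    (hh.intervalIntegrable_radialFlux hγd hγ2 hb) (hh.intervalIntegrable_radialFlux hγd hγ2 ha)]
  exact intervalIntegral.integral_nonneg hab hflux

end IsLocallyRpowBounded

lemma radialFlux_mul_rpow_le {K q z : ℝ} {ρ V : ℝ → ℝ} (hγd : γ < d) (hq : 0 ≤ q) (hz : 0 < z)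
    (hρ : ∀ᵐ ζ ∂volume.restrict (Ioi 0), |ρ ζ| ≤ K * ζ ^ (-γ))
    (hVnn : ∀ ζ, 0 ≤ ζ → 0 ≤ V ζ) (hVmono : MonotoneOn V (Ici 0)) :
    radialFlux d (fun ζ => ρ ζ * V ζ ^ q) z ≤ K / (d - γ) * z ^ (1 - γ) * V z ^ q := by
  have hbound : ∀ᵐ ζ ∂volume.restrict (Ioc 0 z),
      |ρ ζ * V ζ ^ q| ≤ K * V z ^ q * ζ ^ (-γ) := by
    filter_upwards [ae_restrict_of_ae_restrict_of_subset Ioc_subset_Ioi_self hρ,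
      ae_restrict_mem measurableSet_Ioc] with ζ hρζ hζ
    have hVζ := hVnn ζ hζ.1.le
    have hVq : V ζ ^ q ≤ V z ^ q := Real.rpow_le_rpow hVζ (hVmono hζ.1.le hz.le hζ.2) hq
    calc |ρ ζ * V ζ ^ q| = |ρ ζ| * V ζ ^ q := by
          rw [abs_mul, abs_of_nonneg (Real.rpow_nonneg hVζ q)]
      _ ≤ K * ζ ^ (-γ) * V z ^ q :=
          mul_le_mul hρζ hVq (Real.rpow_nonneg hVζ q) ((abs_nonneg _).trans hρζ)
      _ = K * V z ^ q * ζ ^ (-γ) := by ring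
  calc radialFlux d (fun ζ => ρ ζ * V ζ ^ q) z
      ≤ K * V z ^ q / (d - γ) * z ^ (1 - γ) :=
        (le_abs_self _).trans (abs_radialFlux_le hγd hz hbound)
    _ = K / (d - γ) * z ^ (1 - γ) * V z ^ q := by ring

end RadialPotential

section PowerGrowth

variable {U U' : ℝ → ℝ} {B p σ : ℝ}

lemma rpow_le_add_of_deriv_le_of_pos (hp : 0 ≤ p) (hσ : 0 < σ) (hUc : ContinuousOn U (Ici 0))
    (hUpos : ∀ z, 0 ≤ z → 0 < U z) (hUd : ∀ z, 0 < z → HasDerivAt U (U' z) z)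
    (hU' : ∀ z, 0 < z → U' z ≤ B * z ^ (σ - 1) * U z ^ (1 - p)) {y : ℝ} (hy : 0 ≤ y) :
    U y ^ p ≤ U 0 ^ p + p * B / σ * y ^ σ := by
  have hderiv (z : ℝ) (hz : 0 < z) : HasDerivAt (fun y => U y ^ p - p * B / σ * y ^ σ)
      (U' z * p * U z ^ (p - 1) - p * B / σ * (σ * z ^ (σ - 1))) z :=
    ((hUd z hz).rpow_const (Or.inl (hUpos z hz.le).ne')).sub
      ((Real.hasDerivAt_rpow_const (Or.inl hz.ne')).const_mul _)
  have hderiv_nonpos (z : ℝ) (hz : 0 < z) :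
      U' z * p * U z ^ (p - 1) - p * B / σ * (σ * z ^ (σ - 1)) ≤ 0 := by
    have hUz := hUpos z hz.le
    have hcancel : U z ^ (1 - p) * U z ^ (p - 1) = 1 := by
      rw [← Real.rpow_add hUz, sub_add_sub_cancel, sub_self, Real.rpow_zero]
    rw [sub_nonpos]
    calc U' z * p * U z ^ (p - 1)
        ≤ B * z ^ (σ - 1) * U z ^ (1 - p) * p * U z ^ (p - 1) := by gcongr; exact hU' z hz
      _ = p * B * z ^ (σ - 1) * (U z ^ (1 - p) * U z ^ (p - 1)) := by ring
      _ = p * B / σ * (σ * z ^ (σ - 1)) := by rw [hcancel]; field_simp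
  have hanti : AntitoneOn (fun y => U y ^ p - p * B / σ * y ^ σ) (Ici 0) := by
    refine antitoneOn_of_deriv_nonpos (convex_Ici 0) ?_ ?_ ?_
    · exact (hUc.rpow_const fun _ _ => Or.inr hp).sub
        (continuousOn_const.mul (continuousOn_id.rpow_const fun _ _ => Or.inr hσ.le))
    · rw [interior_Ici]
      exact fun z hz => (hderiv z hz).differentiableAt.differentiableWithinAt
    · rw [interior_Ici]
      exact fun z hz => (hderiv z hz).deriv.trans_le (hderiv_nonpos z hz)
  have hle := hanti self_mem_Ici hy hy
  simp only [Real.zero_rpow hσ.ne', mul_zero, sub_zero] at hle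
  linarith

lemma rpow_le_add_of_deriv_le (hp0 : 0 ≤ p) (hp1 : p ≤ 1) (hσ : 0 < σ) (hB : 0 ≤ B)
    (hUc : ContinuousOn U (Ici 0)) (hUnn : ∀ z, 0 ≤ z → 0 ≤ U z)
    (hUd : ∀ z, 0 < z → HasDerivAt U (U' z) z)
    (hU' : ∀ z, 0 < z → U' z ≤ B * z ^ (σ - 1) * U z ^ (1 - p)) {y : ℝ} (hy : 0 ≤ y) :
    U y ^ p ≤ U 0 ^ p + p * B / σ * y ^ σ := by
  -- `U` may vanish, where `U ^ p` is not differentiable: apply the positive case to `U + δ`.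
  have hshift : ∀ δ ∈ Ioi (0 : ℝ), (U y + δ) ^ p ≤ (U 0 + δ) ^ p + p * B / σ * y ^ σ := by
    intro δ hδ
    refine rpow_le_add_of_deriv_le_of_pos (U := fun z => U z + δ) hp0 hσ
      (hUc.add continuousOn_const) (fun z hz => add_pos_of_nonneg_of_pos (hUnn z hz) hδ)
      (fun z hz => (hUd z hz).add_const δ) (fun z hz => (hU' z hz).trans ?_) hy
    have hUz := hUnn z hz.le
    have hUδ : U z ≤ U z + δ := le_add_of_nonneg_right (le_of_lt hδ)
    gcongr
  have hlim (a : ℝ) : Tendsto (fun δ : ℝ => (a + δ) ^ p) (nhdsWithin 0 (Ioi 0)) (nhds (a ^ p)) := by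
    have hcont : Continuous fun δ : ℝ => (a + δ) ^ p :=
      (continuous_const.add continuous_id).rpow_const fun _ => Or.inr hp0
    simpa only [add_zero] using (hcont.tendsto 0).mono_left nhdsWithin_le_nhds
  exact le_of_tendsto_of_tendsto (hlim (U y)) ((hlim (U 0)).add_const _)
    (eventually_mem_nhdsWithin.mono hshift)

lemma eventually_div_rpow_le_of_rpow_le_add {A C ε : ℝ} (hp : 0 < p) (hσ : 0 < σ)
    (hUnn : ∀ y, 0 ≤ y → 0 ≤ U y) (hU : ∀ y, 0 ≤ y → U y ^ p ≤ C + A * y ^ σ) (hε : 0 < ε) :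
    ∀ᶠ y in atTop, U y / y ^ (σ / p) ≤ A ^ p⁻¹ + ε := by
  have hlim : Tendsto (fun y : ℝ => (C * y ^ (-σ) + A) ^ p⁻¹) atTop (nhds (A ^ p⁻¹)) := by
    have hbase := ((tendsto_rpow_neg_atTop hσ).const_mul C).add_const A
    rw [mul_zero, zero_add] at hbase
    exact hbase.rpow_const (Or.inr (inv_nonneg.2 hp.le))
  filter_upwards [hlim.eventually (gt_mem_nhds (lt_add_of_pos_right _ hε)),
    eventually_gt_atTop 0] with y hyε hy
  have hyσ : 0 < y ^ σ := Real.rpow_pos_of_pos hy σ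
  have hUp : 0 ≤ U y ^ p := Real.rpow_nonneg (hUnn y hy.le) p
  calc U y / y ^ (σ / p) = (U y ^ p / y ^ σ) ^ p⁻¹ := by
        rw [Real.div_rpow hUp hyσ.le, Real.rpow_rpow_inv (hUnn y hy.le) hp.ne',
          ← Real.rpow_mul hy.le, div_eq_mul_inv σ]
    _ ≤ (C * y ^ (-σ) + A) ^ p⁻¹ := by
        refine Real.rpow_le_rpow (div_nonneg hUp hyσ.le) ?_ (inv_nonneg.2 hp.le)
        rw [div_le_iff₀ hyσ, add_mul, mul_assoc, ← Real.rpow_add hy, neg_add_cancel,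
          Real.rpow_zero, mul_one]
        exact hU y hy.le
    _ ≤ A ^ p⁻¹ + ε := hyε.le

end PowerGrowth

section RadialODE

variable {d m γ K c : ℝ} {ρ V : ℝ → ℝ}

lemma radial_ode_rpow_le (hm : 1 < m) (hγd : γ < d) (hγ2 : γ < 2) (hK : 0 ≤ K)
    (hρm : AEStronglyMeasurable ρ (volume.restrict (Ioi 0)))
    (hρ : ∀ᵐ y ∂volume.restrict (Ioi 0), 0 ≤ ρ y ∧ ρ y ≤ K * y ^ (-γ))
    (hVc : ContinuousOn V (Ici 0)) (hVnn : ∀ y, 0 ≤ y → 0 ≤ V y)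
    (hVeq : ∀ y, 0 ≤ y → V y = c + radialPotential d (fun ζ => ρ ζ * V ζ ^ (1 / m)) y)
    {y : ℝ} (hy : 0 ≤ y) :
    V y ^ ((m - 1) / m) ≤
      V 0 ^ ((m - 1) / m) + (m - 1) * K / (m * (d - γ) * (2 - γ)) * y ^ (2 - γ) := by
  have hm0 : 0 < m := by linarith
  have hd : 0 < d - γ := sub_pos.2 hγd
  have hq : 0 ≤ 1 / m := by positivity
  have hρabs : ∀ᵐ y ∂volume.restrict (Ioi 0), |ρ y| ≤ K * y ^ (-γ) :=
    hρ.mono fun y hρy => (abs_of_nonneg hρy.1).trans_le hρy.2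
  have hsource : IsLocallyRpowBounded γ (fun ζ => ρ ζ * V ζ ^ (1 / m)) :=
    IsLocallyRpowBounded.mul_continuousOn
      ⟨hρm, fun _ => ⟨K, ae_restrict_of_ae_restrict_of_subset Ioc_subset_Ioi_self hρabs⟩⟩
      (hVc.rpow_const fun _ _ => Or.inr hq)
  have hsource_nonneg : ∀ᵐ ζ ∂volume.restrict (Ioi 0), 0 ≤ ρ ζ * V ζ ^ (1 / m) := by
    filter_upwards [hρ, ae_restrict_mem measurableSet_Ioi] with ζ hρζ hζ
    exact mul_nonneg hρζ.1 (Real.rpow_nonneg (hVnn ζ (le_of_lt hζ)) _)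
  have hVmono : MonotoneOn V (Ici 0) :=
    ((hsource.monotoneOn_radialPotential hγd hγ2 hsource_nonneg).const_add c).congr
      fun y hy => (hVeq y hy).symm
  have hVderiv (z : ℝ) (hz : 0 < z) :
      HasDerivAt V (radialFlux d (fun ζ => ρ ζ * V ζ ^ (1 / m)) z) z :=
    ((hsource.hasDerivAt_radialPotential hγd hγ2 hz).const_add c).congr_of_eventuallyEq
      ((eventually_gt_nhds hz).mono fun y hy => hVeq y hy.le)
  convert rpow_le_add_of_deriv_le (p := (m - 1) / m) (σ := 2 - γ) (B := K / (d - γ))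
    (div_nonneg (by linarith) hm0.le) ((div_le_one hm0).2 (by linarith)) (by linarith)
    (by positivity) hVc hVnn hVderiv (fun z hz => ?_) hy using 3
  · field_simp
  · rw [show 2 - γ - 1 = 1 - γ by ring, show 1 - (m - 1) / m = 1 / m by field_simp; ring]
    exact radialFlux_mul_rpow_le hγd hq hz hρabs hVnn hVmono

theorem radial_ode_limsup_general (hm : 1 < m) (hγd : γ < d) (hγ2 : γ < 2) (hK : 0 ≤ K)
    (hρm : AEStronglyMeasurable ρ (volume.restrict (Ioi 0)))
    (hρ : ∀ᵐ y ∂volume.restrict (Ioi 0), 0 ≤ ρ y ∧ ρ y ≤ K * y ^ (-γ))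
    (hVc : ContinuousOn V (Ici 0)) (hVnn : ∀ y, 0 ≤ y → 0 ≤ V y)
    (hVeq : ∀ y, 0 ≤ y → V y = c + radialPotential d (fun ζ => ρ ζ * V ζ ^ (1 / m)) y)
    {ε : ℝ} (hε : 0 < ε) :
    ∀ᶠ y in atTop, V y / y ^ ((2 - γ) * m / (m - 1)) ≤
      ((m - 1) * K / (m * (d - γ) * (2 - γ))) ^ (m / (m - 1)) + ε := by
  simpa only [div_div_eq_mul_div, inv_div] using
    eventually_div_rpow_le_of_rpow_le_add (p := (m - 1) / m) (div_pos (by linarith) (by linarith))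
      (sub_pos.2 hγ2) hVnn
      (fun _ hy => radial_ode_rpow_le hm hγd hγ2 hK hρm hρ hVc hVnn hVeq hy) hε

end RadialODE

open MeasureTheory Metric Filter Set ENNReal in
/-- **Upper asymptotic bound for the radial elliptic ODE** (Step 2 of the proof of
Proposition 2.7 of Muratori–Petitt):
`limsup_{y→∞} V(y)/y^{(2-γ)m/(m-1)} ≤ [(m-1)K/(m(N-γ)(2-γ))]^{m/(m-1)}`, expressed in the
equivalent form: for every `ε > 0`, eventually in `y`,
`V(y)/y^{(2-γ)m/(m-1)} ≤ [(m-1)K/(m(N-γ)(2-γ))]^{m/(m-1)} + ε`. -/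
theorem radial_ode_limsup
    (N : ℕ) (hN : 3 ≤ N) (m γ k K : ℝ)
    (hm : 1 < m) (hγ0 : 0 ≤ γ) (hγ2 : γ < 2) (hk : 0 < k) (hkK : k ≤ K)
    (ρ : ℝ → ℝ) (hρm : Measurable ρ)
    (hρ : ∀ᵐ y ∂(volume.restrict (Ioi (0 : ℝ))),
      k * (1 + y) ^ (-γ) ≤ ρ y ∧ ρ y ≤ K * y ^ (-γ))
    (β : ℝ) (hβ : 0 < β)
    (V : ℝ → ℝ) (hVc : ContinuousOn V (Ici 0)) (hVnn : ∀ y : ℝ, 0 ≤ y → 0 ≤ V y)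
    (hVeq : ∀ y : ℝ, 0 ≤ y → V y = β ^ m +
      ∫ z in (0 : ℝ)..y, z ^ (-((N : ℝ) - 1)) *
        ∫ ζ in (0 : ℝ)..z, ζ ^ ((N : ℝ) - 1) * ρ ζ * V ζ ^ (1 / m)) :
    ∀ ε : ℝ, 0 < ε → ∀ᶠ y in atTop,
      V y / y ^ ((2 - γ) * m / (m - 1)) ≤
        ((m - 1) * K / (m * ((N : ℝ) - γ) * (2 - γ))) ^ (m / (m - 1)) + ε := by
  have hN' : (3 : ℝ) ≤ N := by exact_mod_cast hN
  have hρ' : ∀ᵐ y ∂volume.restrict (Ioi 0), 0 ≤ ρ y ∧ ρ y ≤ K * y ^ (-γ) := by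
    filter_upwards [hρ, ae_restrict_mem measurableSet_Ioi] with y hρy hy
    have hy0 : (0 : ℝ) < y := hy
    exact ⟨le_trans (by positivity) hρy.1, hρy.2⟩
  exact fun ε hε => radial_ode_limsup_general hm (by linarith) hγ2 (hk.le.trans hkK)
    hρm.aestronglyMeasurable hρ' hVc hVnn
    (by simpa only [radialPotential, radialFlux, mul_assoc] using hVeq) hε
end

section
/- Let N ≥ 3, m > 1, γ ∈ [0,2), 0 < k ≤ K, let ρ satisfy the weight condition, and let α > (2−γ)/(2(m−1)) + (N−γ)/2. Then there exists a constant E > 0 depending only on N, m, γ, α such that for every f ∈ X: ∫_{ℝᴺ} |f(x)| (1+|x|²)^{−α} ρ(x) dx ≤ E ‖f‖_{1,1}. In particular X is continuously embedded in L¹(Φ_α). -/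
open MeasureTheory Metric Filter Set ENNReal

/-!
Membership in `X` says that the measure `|f| ρ dx` gives the ball `B_R` mass at most
`R ^ s * ‖f‖_{1,1}` for `R ≥ 1`, where `s = (2 - γ) / (m - 1) + N - γ`. On the dyadic shell of outer
radius `2 ^ n` the weight `Φ_α` is comparable to `2 ^ (-2 * α * n)`, so that shell contributes at
most a constant times `2 ^ ((s - 2 * α) * n)`, and these bounds form a convergent geometric series
because `s < 2 * α`.
-/

theorem rpow_le_rpow_abs_mul_rpow {a c t : ℝ} (ha : 0 < a) (hc : 0 < c) (hlow : a / c ≤ t)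
    (hup : t ≤ c * a) (p : ℝ) : t ^ p ≤ c ^ |p| * a ^ p := by
  have ht : 0 < t := (div_pos ha hc).trans_le hlow
  rcases le_total 0 p with hp | hp
  · calc t ^ p ≤ (c * a) ^ p := Real.rpow_le_rpow ht.le hup hp
      _ = c ^ |p| * a ^ p := by rw [Real.mul_rpow hc.le ha.le, abs_of_nonneg hp]
  · calc t ^ p ≤ (a / c) ^ p := Real.rpow_le_rpow_of_nonpos (div_pos ha hc) hlow hp
      _ = c ^ |p| * a ^ p := by
        rw [Real.div_rpow ha.le hc.le, abs_of_nonpos hp, Real.rpow_neg hc.le, div_eq_inv_mul]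

section MetricMeasure

variable {X : Type*} [PseudoMetricSpace X] {x₀ x : X}

theorem iUnion_ball_pow {b : ℝ} (hb : 1 < b) (x₀ : X) : ⋃ n : ℕ, ball x₀ (b ^ n) = univ :=
  eq_univ_of_forall fun x ↦ mem_iUnion.2 (pow_unbounded_of_one_lt (dist x x₀) hb)

theorem one_add_dist_sq_le_of_mem_ball_two_pow {n : ℕ} (hx : x ∈ ball x₀ (2 ^ n)) :
    1 + dist x x₀ ^ 2 ≤ 4 * (2 ^ n) ^ 2 := by
  have hdist : dist x x₀ ≤ 2 ^ n := (mem_ball.1 hx).le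
  have hsq : dist x x₀ ^ 2 ≤ (2 ^ n) ^ 2 := by gcongr
  have hone : (1 : ℝ) ≤ (2 ^ n) ^ 2 := one_le_pow₀ (one_le_pow₀ one_le_two)
  linarith

theorem le_one_add_dist_sq_of_mem_disjointed_ball {n : ℕ}
    (hx : x ∈ disjointed (fun n : ℕ ↦ ball x₀ (2 ^ n)) n) :
    (2 ^ n) ^ 2 / 4 ≤ 1 + dist x x₀ ^ 2 := by
  cases n with
  | zero => linarith [sq_nonneg (dist x x₀)]
  | succ n =>
    have hmono : Monotone fun n : ℕ ↦ ball x₀ ((2 : ℝ) ^ n) := fun _ _ h ↦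
      ball_subset_ball (pow_le_pow_right₀ one_le_two h)
    rw [hmono.disjointed_add_one] at hx
    have hdist : 2 ^ n ≤ dist x x₀ := not_lt.1 hx.2
    have hsq : (2 ^ n) ^ 2 ≤ dist x x₀ ^ 2 := by gcongr
    rw [pow_succ 2 n, mul_pow]
    linarith

theorem one_add_dist_sq_rpow_le_of_mem_disjointed_ball (p : ℝ) {n : ℕ}
    (hx : x ∈ disjointed (fun n : ℕ ↦ ball x₀ (2 ^ n)) n) :
    (1 + dist x x₀ ^ 2) ^ p ≤ 4 ^ |p| * (2 ^ (2 * p)) ^ n := by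
  have hpow : (((2 : ℝ) ^ n) ^ 2) ^ p = (2 ^ (2 * p)) ^ n := by
    rw [Real.rpow_pow_comm zero_le_two, Real.rpow_mul (by positivity), Real.rpow_two]
  rw [← hpow]
  exact rpow_le_rpow_abs_mul_rpow (by positivity) (by norm_num)
    (le_one_add_dist_sq_of_mem_disjointed_ball hx)
    (one_add_dist_sq_le_of_mem_ball_two_pow (disjointed_subset _ n hx)) p

variable [MeasurableSpace X] [OpensMeasurableSpace X] {μ : Measure X} {s : ℝ} {W : ℝ≥0∞}

theorem setLIntegral_disjointed_ball_one_add_dist_sq_rpow_le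
    (hμ : ∀ R : ℝ, 1 ≤ R → μ (ball x₀ R) ≤ ENNReal.ofReal (R ^ s) * W) (p : ℝ) (n : ℕ) :
    ∫⁻ x in disjointed (fun n : ℕ ↦ ball x₀ (2 ^ n)) n,
        ENNReal.ofReal ((1 + dist x x₀ ^ 2) ^ p) ∂μ ≤
      ENNReal.ofReal (4 ^ |p|) * W * ENNReal.ofReal (2 ^ (s + 2 * p)) ^ n := by
  set S := disjointed (fun n : ℕ ↦ ball x₀ (2 ^ n)) n
  have hS : MeasurableSet S := MeasurableSet.disjointed (fun _ ↦ measurableSet_ball) n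
  have hμS : μ S ≤ ENNReal.ofReal ((2 ^ s) ^ n) * W := by
    rw [Real.rpow_pow_comm zero_le_two]
    exact (measure_mono (disjointed_subset _ n)).trans (hμ _ (one_le_pow₀ one_le_two))
  calc ∫⁻ x in S, ENNReal.ofReal ((1 + dist x x₀ ^ 2) ^ p) ∂μ
      ≤ ∫⁻ _ in S, ENNReal.ofReal (4 ^ |p| * (2 ^ (2 * p)) ^ n) ∂μ :=
        setLIntegral_mono' hS fun _ hx ↦
          ENNReal.ofReal_le_ofReal (one_add_dist_sq_rpow_le_of_mem_disjointed_ball p hx)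
    _ = ENNReal.ofReal (4 ^ |p| * (2 ^ (2 * p)) ^ n) * μ S := setLIntegral_const S _
    _ ≤ ENNReal.ofReal (4 ^ |p| * (2 ^ (2 * p)) ^ n) * (ENNReal.ofReal ((2 ^ s) ^ n) * W) := by
        gcongr
    _ = ENNReal.ofReal (4 ^ |p|) * W * ENNReal.ofReal (2 ^ (s + 2 * p)) ^ n := by
        rw [Real.rpow_add two_pos, ENNReal.ofReal_mul (by positivity),
          ENNReal.ofReal_mul (by positivity), mul_pow, ENNReal.ofReal_pow (by positivity),
          ENNReal.ofReal_pow (by positivity)]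
        ring

theorem lintegral_one_add_dist_sq_rpow_le
    (hμ : ∀ R : ℝ, 1 ≤ R → μ (ball x₀ R) ≤ ENNReal.ofReal (R ^ s) * W)
    {p : ℝ} (hp : s + 2 * p < 0) :
    ∫⁻ x, ENNReal.ofReal ((1 + dist x x₀ ^ 2) ^ p) ∂μ ≤
      ENNReal.ofReal (4 ^ |p| * (1 - 2 ^ (s + 2 * p))⁻¹) * W := by
  set q : ℝ := 2 ^ (s + 2 * p)
  have hq : q < 1 := Real.rpow_lt_one_of_one_lt_of_neg one_lt_two hp
  set S := disjointed fun n : ℕ ↦ ball x₀ (2 ^ n)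
  have hS : ⋃ n, S n = univ := by rw [iUnion_disjointed, iUnion_ball_pow one_lt_two]
  calc ∫⁻ x, ENNReal.ofReal ((1 + dist x x₀ ^ 2) ^ p) ∂μ
      = ∫⁻ x in ⋃ n, S n, ENNReal.ofReal ((1 + dist x x₀ ^ 2) ^ p) ∂μ := by
        rw [hS, setLIntegral_univ]
    _ ≤ ∑' n, ∫⁻ x in S n, ENNReal.ofReal ((1 + dist x x₀ ^ 2) ^ p) ∂μ := lintegral_iUnion_le _ _
    _ ≤ ∑' n, ENNReal.ofReal (4 ^ |p|) * W * ENNReal.ofReal q ^ n :=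
        ENNReal.tsum_le_tsum (setLIntegral_disjointed_ball_one_add_dist_sq_rpow_le hμ p)
    _ = ENNReal.ofReal (4 ^ |p|) * W * (1 - ENNReal.ofReal q)⁻¹ := by
        rw [ENNReal.tsum_mul_left, ENNReal.tsum_geometric]
    _ = ENNReal.ofReal (4 ^ |p| * (1 - q)⁻¹) * W := by
        rw [ENNReal.ofReal_mul (by positivity), ENNReal.ofReal_inv_of_pos (sub_pos.2 hq),
          ENNReal.ofReal_sub _ (by positivity), ENNReal.ofReal_one, mul_right_comm]

end MetricMeasure

section WeightedSpace

variable {N : ℕ} {ρ f : Euc N → ℝ} {m γ : ℝ}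

theorem WeightCond.ae_nonneg {k K : ℝ} (hρ : WeightCond N γ k K ρ) (hk : 0 ≤ k) :
    0 ≤ᵐ[volume] ρ := by
  filter_upwards [hρ.2] with x hx
  exact le_trans (by positivity) hx.1

theorem LocInt1.aestronglyMeasurable (hf : LocInt1 ρ f) :
    AEStronglyMeasurable (fun x ↦ |f x| * ρ x) := by
  rw [← Measure.restrict_univ (μ := volume), ← iUnion_ball_nat_succ 0]
  exact .iUnion fun n ↦ (hf _ n.cast_add_one_pos).aestronglyMeasurable

theorem LocInt1.lintegral_withDensity (hf : LocInt1 ρ f) {w : Euc N → ℝ} (hw : Measurable w)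
    (hw0 : 0 ≤ w) :
    ∫⁻ x, ENNReal.ofReal (w x) ∂volume.withDensity (fun x ↦ ENNReal.ofReal (|f x| * ρ x)) =
      ∫⁻ x, ENNReal.ofReal (|f x| * w x * ρ x) := by
  rw [lintegral_withDensity_eq_lintegral_mul₀
    hf.aestronglyMeasurable.aemeasurable.ennreal_ofReal hw.ennreal_ofReal.aemeasurable]
  refine lintegral_congr fun x ↦ ?_
  rw [Pi.mul_apply, ← ENNReal.ofReal_mul' (hw0 x), mul_right_comm]

theorem memX.setIntegral_ball_le (hf : memX ρ m γ f) {R : ℝ} (hR : 1 ≤ R) :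
    ∫ x in ball (0 : Euc N) R, |f x| * ρ x ≤
      R ^ ((2 - γ) / (m - 1) + N - γ) * wnorm1 ρ m γ 1 f := by
  have hR0 : 0 < R := zero_lt_one.trans_le hR
  have hle : R ^ (-((2 - γ) / (m - 1)) - (N : ℝ) + γ) * ∫ x in ball (0 : Euc N) R, |f x| * ρ x ≤
      wnorm1 ρ m γ 1 f := le_csSup hf.2 ⟨R, hR, rfl⟩
  rwa [show -((2 - γ) / (m - 1)) - N + γ = -((2 - γ) / (m - 1) + N - γ) by ring,
    Real.rpow_neg hR0.le, inv_mul_le_iff₀ (Real.rpow_pos_of_pos hR0 _)] at hle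

theorem memX.withDensity_ball_le (hf : memX ρ m γ f) (hρ : 0 ≤ᵐ[volume] ρ) {R : ℝ} (hR : 1 ≤ R) :
    volume.withDensity (fun x ↦ ENNReal.ofReal (|f x| * ρ x)) (ball 0 R) ≤
      ENNReal.ofReal (R ^ ((2 - γ) / (m - 1) + N - γ)) * ENNReal.ofReal (wnorm1 ρ m γ 1 f) := by
  have hnonneg : ∀ᵐ x ∂volume.restrict (ball (0 : Euc N) R), 0 ≤ |f x| * ρ x :=
    ae_restrict_of_ae (hρ.mono fun x hx ↦ mul_nonneg (abs_nonneg _) hx)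
  rw [withDensity_apply _ measurableSet_ball,
    ← ofReal_integral_eq_lintegral_ofReal (hf.1 R (by positivity)) hnonneg,
    ← ENNReal.ofReal_mul (by positivity)]
  exact ENNReal.ofReal_le_ofReal (hf.setIntegral_ball_le hR)

end WeightedSpace

theorem embedding_X_L1Phi_general (N : ℕ) {m γ α : ℝ} (hm : m ≠ 1)
    (hα : (2 - γ) / (2 * (m - 1)) + ((N : ℝ) - γ) / 2 < α) :
    ∃ E : ℝ, 0 < E ∧
      ∀ ρ : Euc N → ℝ, 0 ≤ᵐ[volume] ρ →
      ∀ f : Euc N → ℝ, memX ρ m γ f →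
        ∫⁻ x : Euc N, ENNReal.ofReal (|f x| * (1 + ‖x‖ ^ 2) ^ (-α) * ρ x) ≤
          ENNReal.ofReal (E * wnorm1 ρ m γ 1 f) := by
  have hs : (2 - γ) / (m - 1) + N - γ + 2 * -α < 0 := by
    have hm1 : m - 1 ≠ 0 := sub_ne_zero.2 hm
    have hhalf : (2 - γ) / (m - 1) = 2 * ((2 - γ) / (2 * (m - 1))) := by field_simp
    linarith
  have hq : (2 : ℝ) ^ ((2 - γ) / (m - 1) + N - γ + 2 * -α) < 1 :=
    Real.rpow_lt_one_of_one_lt_of_neg one_lt_two hs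
  have hE : 0 < 4 ^ |-α| * (1 - (2 : ℝ) ^ ((2 - γ) / (m - 1) + N - γ + 2 * -α))⁻¹ :=
    mul_pos (by positivity) (inv_pos.2 (sub_pos.2 hq))
  refine ⟨_, hE, fun ρ hρ f hf ↦ ?_⟩
  rw [← hf.1.lintegral_withDensity (by fun_prop) (fun x ↦ by positivity),
    ENNReal.ofReal_mul hE.le]
  simpa only [dist_zero_right] using
    lintegral_one_add_dist_sq_rpow_le (fun R hR ↦ hf.withDensity_ball_le hρ hR) hs

open MeasureTheory Metric Filter Set ENNReal in
/-- **Continuous embedding `X ↪ L¹(Φ_α)`** (Proposition A.1(1) of Muratori–Petitt): for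
`α > (2-γ)/(2(m-1)) + (N-γ)/2` there is `E > 0` depending only on `N, m, γ, α` such that
`∫ |f| Φ_α ρ dx ≤ E ‖f‖_{1,1}` for every `f ∈ X`. -/
theorem embedding_X_L1Phi
    (N : ℕ) (hN : 3 ≤ N) (m γ α : ℝ)
    (hm : 1 < m) (hγ0 : 0 ≤ γ) (hγ2 : γ < 2)
    (hα : (2 - γ) / (2 * (m - 1)) + ((N : ℝ) - γ) / 2 < α) :
    ∃ E : ℝ, 0 < E ∧
      ∀ k K : ℝ, 0 < k → k ≤ K →
      ∀ ρ : Euc N → ℝ, WeightCond N γ k K ρ →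
      ∀ f : Euc N → ℝ, memX ρ m γ f →
        ∫⁻ x : Euc N, ENNReal.ofReal (|f x| * (1 + ‖x‖ ^ 2) ^ (-α) * ρ x) ≤
          ENNReal.ofReal (E * wnorm1 ρ m γ 1 f) := by
  obtain ⟨E, hE, hbound⟩ := embedding_X_L1Phi_general N hm.ne' hα
  exact ⟨E, hE, fun _ _ hk _ ρ hρ f hf ↦ hbound ρ (hρ.ae_nonneg hk.le) f hf⟩
end
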